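/- Let G be a connected triangle-free graph. Then μ(G) = 3 if and only if G is a tree with exactly three leaves or G is a frog graph. -/

import Mathlib

open SimpleGraph

/-- Two vertices `u v ∈ X` are `X`-visible in `G`: there is a shortest `u,v`-path
whose only vertices in `X` are `u` and `v`. -/
def VisiblePair {V : Type*} (G : SimpleGraph V) (X : Set V) (u v : V) : Prop :=
  ∃ p : G.Walk u v, p.IsPath ∧ p.length = G.dist u v ∧
    ∀ w ∈ p.support, w ∈ X → w = u ∨ w = v

/-- `X` is a mutual-visibility set of `G`. -/
def IsMVSet {V : Type*} (G : SimpleGraph V) (X : Set V) : Prop :=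
  ∀ u ∈ X, ∀ v ∈ X, u ≠ v → VisiblePair G X u v

/-- `X` is an independent set of `G`. -/
def IsIndep {V : Type*} (G : SimpleGraph V) (X : Set V) : Prop :=
  ∀ u ∈ X, ∀ v ∈ X, ¬ G.Adj u v

/-- The mutual-visibility number `μ(G)`. -/
noncomputable def mu {V : Type*} (G : SimpleGraph V) : ℕ :=
  sSup {n | ∃ X : Set V, IsMVSet G X ∧ X.ncard = n}

/-- The independent mutual-visibility number `μᵢ(G)`. -/
noncomputable def muI {V : Type*} (G : SimpleGraph V) : ℕ :=
  sSup {n | ∃ X : Set V, IsMVSet G X ∧ IsIndep G X ∧ X.ncard = n}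

/-- The independence number `α(G)`. -/
noncomputable def indepNumber {V : Type*} (G : SimpleGraph V) : ℕ :=
  sSup {n | ∃ X : Set V, IsIndep G X ∧ X.ncard = n}

/-- The frog graph built from a cycle on `n ≥ 3` vertices with tails of `a` and `b`
extra vertices attached at the antipodal cycle vertices `0` and `⌊n/2⌋`. -/
def frogGraph (n a b : ℕ) : SimpleGraph (Fin n ⊕ (Fin a ⊕ Fin b)) :=
  SimpleGraph.fromRel (fun x y =>
    match x, y with
    | Sum.inl i, Sum.inl j => (j : ℕ) = ((i : ℕ) + 1) % n
    | Sum.inl i, Sum.inr (Sum.inl k) => (i : ℕ) = 0 ∧ (k : ℕ) = 0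
    | Sum.inl i, Sum.inr (Sum.inr k) => (i : ℕ) = n / 2 ∧ (k : ℕ) = 0
    | Sum.inr (Sum.inl k), Sum.inr (Sum.inl l) => (l : ℕ) = (k : ℕ) + 1
    | Sum.inr (Sum.inr k), Sum.inr (Sum.inr l) => (l : ℕ) = (k : ℕ) + 1
    | _, _ => False)

/-- `G` is a frog graph: a cycle with two (possibly trivial) paths attached at
two antipodal vertices of the cycle. -/
def IsFrog {V : Type*} (G : SimpleGraph V) : Prop :=
  ∃ (n a b : ℕ), 3 ≤ n ∧ Nonempty (G ≃g frogGraph n a b)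

/-!
In a tree the leaves form a mutual-visibility set, and pushing the points of any other such set
outwards along geodesics to distinct leaves shows that `μ` is the number of leaves.

If `G` is not a tree, three vertices cutting a shortest cycle `C` into arcs of at most half its
length see each other. A branching outside `C`, or two attachment vertices of `C` that are not
antipodal, would give four such vertices, with the neighbours of one or two vertices as the basic
building block; so at most two paths hang off `C`, at antipodal vertices.

Conversely, let `x₀, x₁, x₂, x₃` be four mutually visible vertices of a frog graph, in the order of
their nearest cycle vertices, which are distinct. If neither of `x₁, x₃` lay on a tail, they would
separate `x₀` from `x₂`, and likewise with the two pairs exchanged. So one vertex of each pair lies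
on a tail. The other two lie in the same arc between the tails, where one blocks the other's way to
the tail at `0`: going around the cycle through the antipode instead is never shortest.
-/

section Distance

variable {V : Type*} {G : SimpleGraph V}

theorem dist_add_dist_le_length {x y z : V} (p : G.Walk x y) (hz : z ∈ p.support) :
    G.dist x z + G.dist z y ≤ p.length := by
  classical
  rw [← p.take_spec hz, Walk.length_append]
  exact add_le_add (dist_le _) (dist_le _)

theorem dist_le_dist_add_one_of_adj {x y : V} (h : G.Adj x y) (z : V) :
    G.dist x z ≤ G.dist y z + 1 := by
  have := h.reachable.dist_triangle_left z
  rw [dist_eq_one_iff_adj.2 h] at this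
  omega

theorem not_adj_of_common_neighbor (htf : G.CliqueFree 3) {u a b : V} (ha : G.Adj u a)
    (hb : G.Adj u b) : ¬G.Adj a b := fun h => by
  classical
  exact htf {u, a, b} (is3Clique_triple_iff.2 ⟨ha, hb, h⟩)

theorem dist_eq_two_of_common_neighbor (htf : G.CliqueFree 3) {u a b : V} (ha : G.Adj u a)
    (hb : G.Adj u b) (hab : a ≠ b) : G.dist a b = 2 := by
  have hle : G.dist a b ≤ 2 := G.dist_le (.cons ha.symm (.cons hb .nil))
  have hgt := (ha.symm.reachable.trans hb.reachable).one_lt_dist_of_ne_of_not_adj hab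
    (not_adj_of_common_neighbor htf ha hb)
  omega

theorem dist_map_iso {W : Type*} {H : SimpleGraph W} (f : G ≃g H) (x y : V) :
    H.dist (f x) (f y) = G.dist x y := by
  rw [dist_eq_sInf, dist_eq_sInf]
  congr 1
  ext n
  constructor <;> rintro ⟨p, rfl⟩
  · refine ⟨(p.map f.symm.toHom).copy (f.symm_apply_apply x) (f.symm_apply_apply y), ?_⟩
    rw [Walk.length_copy, Walk.length_map]
  · exact ⟨p.map f.toHom, p.length_map _⟩

end Distance

section MutualVisibility

variable {V : Type*} {G : SimpleGraph V} {X : Set V}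

theorem VisiblePair.symm {x y : V} (h : VisiblePair G X x y) : VisiblePair G X y x := by
  obtain ⟨p, hp, hl, hX⟩ := h
  refine ⟨p.reverse, hp.reverse, by rw [Walk.length_reverse, hl, dist_comm], fun w hw hwX => ?_⟩
  rw [Walk.support_reverse, List.mem_reverse] at hw
  exact (hX w hw hwX).symm

-- If the walk is not a geodesic, then no vertex of `X` lies between `x` and `y` at all, so any
-- geodesic will do.
theorem visiblePair_of_walk {x y : V} (p : G.Walk x y)
    (hp : ∀ w ∈ p.support, w ∈ X → w = x ∨ w = y)
    (hd : ∀ z ∈ X, z ≠ x → z ≠ y → p.length ≤ G.dist x z + G.dist z y) :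
    VisiblePair G X x y := by
  by_cases h : p.length = G.dist x y
  · exact ⟨p, p.isPath_of_length_eq_dist h, h, hp⟩
  · obtain ⟨q, hq, hql⟩ := p.reachable.exists_path_of_dist
    refine ⟨q, hq, hql, fun w hw hwX => ?_⟩
    by_contra! hne
    have hpw := hd w hwX hne.1 hne.2
    have hqw := dist_add_dist_le_length q hw
    have hdp := G.dist_le p
    omega

theorem visiblePair_of_forall_dist_lt {x y : V} (hxy : G.Reachable x y)
    (h : ∀ z ∈ X, z ≠ x → z ≠ y → G.dist x y < G.dist x z + G.dist z y) :
    VisiblePair G X x y := by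
  obtain ⟨p, -, hp⟩ := hxy.exists_path_of_dist
  refine visiblePair_of_walk p (fun w hw hwX => ?_)
    fun z hz hzx hzy => hp ▸ (h z hz hzx hzy).le
  by_contra! hne
  have hle := dist_add_dist_le_length p hw
  have hlt := h w hwX hne.1 hne.2
  omega

theorem visiblePair_of_common_neighbor (hconn : G.Connected) {u a b : V} (ha : G.Adj u a)
    (hb : G.Adj u b) (hu : u ∉ X) : VisiblePair G X a b := by
  refine visiblePair_of_walk (.cons ha.symm (.cons hb .nil)) ?_ fun z _ hza hzb => ?_
  · simp only [Walk.support_cons, Walk.support_nil, List.mem_cons, List.not_mem_nil, or_false]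
    rintro w (rfl | rfl | rfl) hw
    exacts [.inl rfl, absurd hw hu, .inr rfl]
  · have haz := hconn.pos_dist_of_ne hza.symm
    have hzb := hconn.pos_dist_of_ne hzb
    simp only [Walk.length_cons, Walk.length_nil]
    omega

theorem VisiblePair.map {W : Type*} {H : SimpleGraph W} (f : G ≃g H) {x y : V}
    (h : VisiblePair G X x y) : VisiblePair H (f '' X) (f x) (f y) := by
  obtain ⟨p, hp, hl, hX⟩ := h
  refine ⟨p.map f.toHom, hp.map f.injective, by rw [Walk.length_map, hl, ← dist_map_iso f], ?_⟩
  simp only [Walk.support_map, List.mem_map]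
  rintro _ ⟨w, hw, rfl⟩ ⟨w', hw', heq⟩
  obtain rfl := f.injective heq
  exact (hX _ hw hw').imp (congrArg f) (congrArg f)

theorem IsMVSet.image {W : Type*} {H : SimpleGraph W} (hX : IsMVSet G X) (f : G ≃g H) :
    IsMVSet H (f '' X) := by
  rintro _ ⟨x, hx, rfl⟩ _ ⟨y, hy, rfl⟩ hxy
  exact (hX x hx y hy (ne_of_apply_ne f hxy)).map f

theorem bddAbove_ncard_isMVSet (G : SimpleGraph V) [Finite V] :
    BddAbove {n | ∃ X : Set V, IsMVSet G X ∧ X.ncard = n} := by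
  refine ⟨Nat.card V, ?_⟩
  rintro n ⟨X, -, rfl⟩
  exact Set.ncard_le_card X

theorem IsMVSet.ncard_le_mu [Finite V] (hX : IsMVSet G X) : X.ncard ≤ mu G :=
  le_csSup (bddAbove_ncard_isMVSet G) ⟨X, hX, rfl⟩

theorem exists_isMVSet_ncard_eq_mu (G : SimpleGraph V) [Finite V] :
    ∃ X, IsMVSet G X ∧ X.ncard = mu G :=
  Nat.sSup_mem (s := {n | ∃ X : Set V, IsMVSet G X ∧ X.ncard = n})
    ⟨0, ∅, fun _ hx => hx.elim, Set.ncard_empty V⟩ (bddAbove_ncard_isMVSet G)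

theorem mu_congr {W : Type*} {H : SimpleGraph W} (f : G ≃g H) : mu G = mu H := by
  refine congrArg sSup (Set.ext fun n => ⟨?_, ?_⟩) <;> rintro ⟨X, hX, rfl⟩
  · exact ⟨_, hX.image f, Set.ncard_image_of_injective X f.injective⟩
  · exact ⟨_, hX.image f.symm, Set.ncard_image_of_injective X f.symm.injective⟩

theorem isMVSet_union_of_subset_neighborSet (hconn : G.Connected) (htf : G.CliqueFree 3)
    {u v : V} {A B : Set V} (hA : ∀ a ∈ A, G.Adj u a ∧ G.dist a v = G.dist u v + 1)
    (hB : ∀ b ∈ B, G.Adj v b ∧ G.dist b u = G.dist u v + 1) : IsMVSet G (A ∪ B) := by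
  obtain ⟨p, -, hp⟩ := hconn.exists_path_of_dist u v
  have hpAB : ∀ w ∈ p.support, w ∉ A ∪ B := by
    rintro w hw (hwA | hwB) <;> have hwp := dist_add_dist_le_length p hw
    · have := (hA w hwA).2
      omega
    · have := (hB w hwB).2
      rw [dist_comm (u := w)] at this
      omega
  have hdist : ∀ a ∈ A, ∀ b ∈ B, G.dist u v ≤ G.dist a b := fun a ha b hb => by
    have := dist_le_dist_add_one_of_adj (hB b hb).1 a
    rw [dist_comm (u := v), dist_comm (u := b), (hA a ha).2] at this
    omega
  have hAB : ∀ a ∈ A, ∀ b ∈ B, VisiblePair G (A ∪ B) a b := fun a ha b hb => by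
    refine visiblePair_of_walk (.cons (hA a ha).1.symm (p.concat (hB b hb).1)) ?_ ?_
    · intro w hw hwX
      simp only [Walk.support_cons, Walk.support_concat, List.mem_cons,
        List.mem_append, List.not_mem_nil, or_false] at hw
      exact hw.imp_right fun h => h.resolve_left fun hwp => hpAB w hwp hwX
    · rw [Walk.length_cons, Walk.length_concat, hp]
      rintro z (hz | hz) hza hzb
      · have := dist_eq_two_of_common_neighbor htf (hA a ha).1 (hA z hz).1 hza.symm
        have := hdist z hz b hb
        omega
      · have := dist_eq_two_of_common_neighbor htf (hB z hz).1 (hB b hb).1 hzb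
        have := hdist a ha z hz
        omega
  rintro x (hx | hx) y (hy | hy) _
  · exact visiblePair_of_common_neighbor hconn (hA x hx).1 (hA y hy).1 (hpAB u p.start_mem_support)
  · exact hAB x hx y hy
  · exact (hAB y hy x hx).symm
  · exact visiblePair_of_common_neighbor hconn (hB x hx).1 (hB y hy).1 (hpAB v p.end_mem_support)

end MutualVisibility

section OuterBoundary

variable {V : Type*} {G : SimpleGraph V}

/-- The vertices outside `S` with a neighbour in `S`: every walk that leaves `S` meets them. -/
def outerBoundary (G : SimpleGraph V) (S : Set V) : Set V :=
  {y | y ∉ S ∧ ∃ x ∈ S, G.Adj x y}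

variable {S : Set V}

theorem exists_mem_support_mem_outerBoundary {x y : V} (p : G.Walk x y) (hx : x ∈ S)
    (hy : y ∉ S) : ∃ z ∈ p.support, z ∈ outerBoundary G S := by
  obtain ⟨d, hd, hfst, hsnd⟩ := p.exists_boundary_dart S hx hy
  exact ⟨d.snd, p.dart_snd_mem_support_of_mem_darts hd, hsnd, d.fst, hfst, d.adj⟩

theorem exists_mem_outerBoundary_dist_add_dist {x y : V} (hxy : G.Reachable x y) (hx : x ∈ S)
    (hy : y ∉ S) : ∃ z ∈ outerBoundary G S, G.dist x z + G.dist z y = G.dist x y := by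
  obtain ⟨p, hp⟩ := hxy.exists_walk_length_eq_dist
  obtain ⟨z, hzp, hz⟩ := exists_mem_support_mem_outerBoundary p hx hy
  have hle := dist_add_dist_le_length p hzp
  have hge : G.dist x y ≤ G.dist x z + G.dist z y := by
    classical exact (p.takeUntil z hzp).reachable.dist_triangle_left y
  exact ⟨z, hz, by omega⟩

theorem IsMVSet.exists_mem_outerBoundary {X : Set V} (hX : IsMVSet G X) {x y : V} (hxX : x ∈ X)
    (hxS : x ∈ S) (hyX : y ∈ X) (hyS : y ∉ S) :
    ∃ z ∈ outerBoundary G S, z ∈ X → z = y := by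
  obtain ⟨p, -, -, hp⟩ := hX x hxX y hyX (ne_of_mem_of_not_mem hxS hyS)
  obtain ⟨z, hzp, hz⟩ := exists_mem_support_mem_outerBoundary p hxS hyS
  exact ⟨z, hz, fun hzX => (hp z hzp hzX).resolve_left (ne_of_mem_of_not_mem hxS hz.1).symm⟩

theorem exists_adj_dist_add_one_eq {x y : V} (hxy : G.Reachable x y) (hne : x ≠ y) :
    ∃ z, G.Adj x z ∧ G.dist z y + 1 = G.dist x y := by
  obtain ⟨z, ⟨-, _, rfl, hz⟩, hzy⟩ :=
    exists_mem_outerBoundary_dist_add_dist (S := {x}) hxy rfl hne.symm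
  rw [dist_eq_one_iff_adj.2 hz] at hzy
  exact ⟨z, hz, by omega⟩

end OuterBoundary

section Trees

variable {V : Type*} {G : SimpleGraph V}

theorem isMVSet_setOf_degree_eq_one [Fintype V] [DecidableRel G.Adj] (hconn : G.Connected) :
    IsMVSet G {v | G.degree v = 1} := by
  intro x _ y _ _
  refine visiblePair_of_forall_dist_lt (hconn x y) fun l hl hlx hly => ?_
  obtain ⟨a, -, ha⟩ := degree_eq_one_iff_existsUnique_adj.1 hl
  obtain ⟨b, hb, hbx⟩ := exists_adj_dist_add_one_eq (hconn l x) hlx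
  obtain ⟨c, hc, hcy⟩ := exists_adj_dist_add_one_eq (hconn l y) hly
  obtain rfl : b = c := (ha b hb).trans (ha c hc).symm
  have := hconn.dist_triangle (u := x) (v := b) (w := y)
  rw [dist_comm (u := x) (v := b)] at this
  rw [dist_comm (u := x) (v := l)]
  omega

theorem mem_support_of_isTree (hG : G.IsTree) {x y z : V}
    (h : G.dist x z + G.dist z y = G.dist x y) (p : G.Walk x y) : z ∈ p.support := by
  classical
  obtain ⟨q, hq⟩ := hG.connected.exists_walk_length_eq_dist x z
  obtain ⟨r, hr⟩ := hG.connected.exists_walk_length_eq_dist z y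
  have hqr : (q.append r).IsPath :=
    Walk.isPath_of_length_eq_dist _ (by rw [Walk.length_append, hq, hr, h])
  have hp : p.bypass = q.append r := congrArg Subtype.val
    ((hG.isAcyclic.subsingleton_path x y).elim ⟨p.bypass, p.bypass_isPath⟩ ⟨q.append r, hqr⟩)
  apply p.support_bypass_subset_support
  rw [hp, Walk.mem_support_append_iff]
  exact .inl q.end_mem_support

theorem between_or_between_of_isTree (hG : G.IsTree) {a b x : V}
    (h : G.dist a x + G.dist x b = G.dist a b) (y : V) :
    G.dist a x + G.dist x y = G.dist a y ∨ G.dist y x + G.dist x b = G.dist y b := by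
  obtain ⟨p, hp⟩ := hG.connected.exists_walk_length_eq_dist a y
  obtain ⟨q, hq⟩ := hG.connected.exists_walk_length_eq_dist y b
  refine ((Walk.mem_support_append_iff p q).1 (mem_support_of_isTree hG h _)).imp
    (fun hx => ?_) fun hx => ?_
  · exact (hp ▸ dist_add_dist_le_length p hx).antisymm hG.connected.dist_triangle
  · exact (hq ▸ dist_add_dist_le_length q hx).antisymm hG.connected.dist_triangle

theorem exists_adj_dist_eq_add_one_of_isTree [Fintype V] [DecidableRel G.Adj] (hG : G.IsTree)
    {r v : V} (hv : v ≠ r) (hdeg : G.degree v ≠ 1) :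
    ∃ w, G.Adj v w ∧ G.dist r w = G.dist r v + 1 := by
  by_contra! hcon
  obtain ⟨p, hp, -⟩ := hG.connected.exists_path_of_dist r v
  have hpen : ∀ w, G.Adj v w → w = p.penultimate := fun w hw => by
    refine hG.isAcyclic.eq_penultimate_of_adj_end hp hw (mem_support_of_isTree hG ?_ p)
    rw [dist_eq_one_iff_adj.2 hw.symm]
    exact ((hG.dist_eq_dist_add_one_of_adj r hw).resolve_right (hcon w hw)).symm
  obtain ⟨w, hw, -⟩ := exists_adj_dist_add_one_eq (hG.connected v r) hv
  exact hdeg (degree_eq_one_iff_existsUnique_adj.2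
    ⟨w, hw, fun z hz => (hpen z hz).trans (hpen w hw).symm⟩)

theorem exists_degree_eq_one_dist_add_dist_eq [Fintype V] [DecidableRel G.Adj] (hG : G.IsTree)
    {r x : V} (hx : x ≠ r) : ∃ l, G.degree l = 1 ∧ G.dist r x + G.dist x l = G.dist r l := by
  obtain ⟨l, hl, hmax⟩ := Set.exists_max_image
    {v | G.dist r x + G.dist x v = G.dist r v} (G.dist r) (Set.toFinite _) ⟨x, by simp⟩
  rw [Set.mem_ofPred_eq] at hl
  refine ⟨l, by_contra fun hdeg => ?_, hl⟩
  have hlr : l ≠ r := by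
    rintro rfl
    have := hG.connected.pos_dist_of_ne hx.symm
    simp only [dist_self] at hl
    omega
  obtain ⟨w, hw, hrw⟩ := exists_adj_dist_eq_add_one_of_isTree hG hlr hdeg
  have hxw := dist_le_dist_add_one_of_adj hw.symm x
  rw [dist_comm, dist_comm (u := l)] at hxw
  have hrxw := hG.connected.dist_triangle (u := r) (v := x) (w := w)
  have := hmax w (by rw [Set.mem_ofPred_eq]; omega)
  omega

theorem IsMVSet.exists_degree_eq_one_forall_dist [Fintype V] [DecidableRel G.Adj] (hG : G.IsTree)
    {X : Set V} (hX : IsMVSet G X) (hnt : X.Nontrivial) {x : V} (hx : x ∈ X) :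
    ∃ l, G.degree l = 1 ∧ ∀ y ∈ X, G.dist y x + G.dist x l = G.dist y l := by
  obtain ⟨r, hr, hrx⟩ := hnt.exists_ne x
  obtain ⟨l, hdeg, hl⟩ := exists_degree_eq_one_dist_add_dist_eq hG hrx.symm
  refine ⟨l, hdeg, fun y hy => ?_⟩
  rcases eq_or_ne y x with rfl | hyx
  · rw [dist_self, zero_add]
  refine (between_or_between_of_isTree hG hl y).resolve_left fun hrxy => ?_
  have hry : r ≠ y := by
    rintro rfl
    have := hG.connected.pos_dist_of_ne hrx
    rw [dist_self] at hrxy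
    omega
  obtain ⟨p, -, -, hp⟩ := hX r hr y hy hry
  exact (hp x (mem_support_of_isTree hG hrxy p) hx).elim hrx.symm hyx.symm

theorem mu_eq_ncard_setOf_degree_eq_one [Fintype V] [DecidableRel G.Adj] [Nontrivial V]
    (hG : G.IsTree) : mu G = {v | G.degree v = 1}.ncard := by
  refine le_antisymm ?_ (isMVSet_setOf_degree_eq_one hG.connected).ncard_le_mu
  obtain ⟨X, hX, hXmu⟩ := exists_isMVSet_ncard_eq_mu G
  rw [← hXmu]
  rcases X.subsingleton_or_nontrivial with hs | hnt
  · obtain ⟨l, hl⟩ := hG.exists_vert_degree_one_of_nontrivial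
    exact (Set.ncard_le_one_iff_subsingleton.2 hs).trans ((Set.ncard_pos).2 ⟨l, hl⟩)
  have hleaf := fun x hx => hX.exists_degree_eq_one_forall_dist hG hnt (x := x) hx
  choose! l hdeg hl using hleaf
  refine Set.ncard_le_ncard_of_injOn l hdeg fun x hx y hy hxy => ?_
  have hyx := hl x hx y hy
  have hxy' := hl y hy x hx
  rw [hxy] at hyx
  exact (hG.connected x y).dist_eq_zero_iff.1 (by omega)

theorem mu_eq_three_iff_of_isTree [Fintype V] [DecidableRel G.Adj] (hG : G.IsTree) :
    mu G = 3 ↔ {v | G.degree v = 1}.ncard = 3 := by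
  rcases subsingleton_or_nontrivial V with _ | _
  · have hle : ∀ X : Set V, X.ncard ≤ 1 := fun X =>
      Set.ncard_le_one_iff_subsingleton.2 X.subsingleton_of_subsingleton
    obtain ⟨X, -, hX⟩ := exists_isMVSet_ncard_eq_mu G
    have hmu := hle X
    have hleaves := hle {v | G.degree v = 1}
    omega
  · rw [mu_eq_ncard_setOf_degree_eq_one hG]

end Trees

section DoubleBroom

variable {V : Type*} {G : SimpleGraph V}

theorem ncard_add_ncard_le_mu [Finite V] (hconn : G.Connected) (htf : G.CliqueFree 3) {u v : V}
    {A B : Set V} (hAB : Disjoint A B) (hA : ∀ a ∈ A, G.Adj u a ∧ G.dist a v = G.dist u v + 1)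
    (hB : ∀ b ∈ B, G.Adj v b ∧ G.dist b u = G.dist u v + 1) : A.ncard + B.ncard ≤ mu G := by
  rw [← Set.ncard_union_eq hAB]
  exact (isMVSet_union_of_subset_neighborSet hconn htf hA hB).ncard_le_mu

end DoubleBroom

section ShortestCycle

variable {V : Type*} {G : SimpleGraph V}

theorem length_eq_dist_of_two_mul_le_girth {x y : V} {p : G.Walk x y} (hp : p.IsPath)
    (hl : 2 * p.length ≤ G.girth) : p.length = G.dist x y := by
  classical
  obtain ⟨q, hq, hql⟩ := p.reachable.exists_path_of_dist
  by_cases h : p = q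
  · rw [h, hql]
  · obtain ⟨w, _, _, c, hc, hlen⟩ := hp.exists_isCycle_length_le_add_of_ne hq h
    have hgirth := girth_le_length hc
    have hdist := G.dist_le p
    omega

theorem four_le_girth (htf : G.CliqueFree 3) (hG : ¬G.IsAcyclic) : 4 ≤ G.girth := by
  refine (three_le_girth hG).lt_of_ne fun h => ?_
  obtain ⟨a, w, hw, hl⟩ := exists_girth_eq_length.2 hG
  obtain ⟨s, hs⟩ := is3Clique_iff_exists_cycle_length_three.2 ⟨a, w, hw, by omega⟩
  exact htf s hs

/-- `c` runs periodically, in both directions, around a cycle of `G` of minimum length; indexing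
by `ℤ` lets every vertex of the cycle serve as origin. -/
structure IsShortestCycle (G : SimpleGraph V) (c : ℤ → V) : Prop where
  three_le_girth : 3 ≤ G.girth
  adj : ∀ i, G.Adj (c i) (c (i + 1))
  eq_iff : ∀ i j, c i = c j ↔ (G.girth : ℤ) ∣ j - i

theorem exists_isShortestCycle (hG : ¬G.IsAcyclic) : ∃ c, IsShortestCycle G c := by
  have h3 := three_le_girth hG
  obtain ⟨a, w, hw, hl⟩ := exists_girth_eq_length.2 hG
  have hmod : ∀ i : ℤ, 0 ≤ i % G.girth ∧ i % G.girth < G.girth := fun i =>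
    ⟨Int.emod_nonneg _ (by omega), Int.emod_lt_of_pos _ (by omega)⟩
  refine ⟨fun i => w.getVert (i % G.girth).toNat, h3, fun i => ?_, fun i j => ?_⟩
  · have hi := hmod i
    convert w.adj_getVert_succ (i := (i % G.girth).toNat) (by omega) using 1
    have hsucc := Int.emod_add_emod i G.girth 1
    by_cases h : i % G.girth + 1 = G.girth
    · rw [← hsucc, h, Int.emod_self, show (i % G.girth).toNat + 1 = w.length by omega,
        Walk.getVert_length, Int.toNat_zero, Walk.getVert_zero]
    · rw [← hsucc, Int.emod_eq_of_lt (by omega) (by omega)]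
      congr 1
      omega
  · have hi := hmod i
    have hj := hmod j
    rw [← Int.modEq_iff_dvd]
    refine ⟨fun h => ?_, fun h => congrArg (fun r => w.getVert r.toNat) h⟩
    have := hw.getVert_injOn' (show _ ≤ w.length - 1 by omega) (show _ ≤ w.length - 1 by omega) h
    change i % G.girth = j % G.girth
    omega

namespace IsShortestCycle

variable {c : ℤ → V}

theorem not_isAcyclic (hc : IsShortestCycle G c) : ¬G.IsAcyclic := fun h => by
  have := hc.three_le_girth
  rw [girth_eq_zero.2 h] at this
  omega

theorem ne_of_lt (hc : IsShortestCycle G c) {i j : ℤ} (hij : i < j) (hji : j < i + G.girth) :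
    c i ≠ c j := fun h => by
  have := Int.le_of_dvd (by omega) ((hc.eq_iff i j).1 h)
  omega

theorem add_girth (hc : IsShortestCycle G c) (i : ℤ) : c (i + G.girth) = c i :=
  ((hc.eq_iff _ _).2 ⟨1, by ring⟩).symm

theorem apply_add_congr (hc : IsShortestCycle G c) {i j : ℤ} (h : c i = c j) (k : ℤ) :
    c (i + k) = c (j + k) := by
  rw [hc.eq_iff] at h ⊢
  rwa [add_sub_add_right_eq_sub]

theorem comp_add_left (hc : IsShortestCycle G c) (k : ℤ) :
    IsShortestCycle G fun i => c (k + i) where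
  three_le_girth := hc.three_le_girth
  adj i := by rw [← add_assoc]; exact hc.adj (k + i)
  eq_iff i j := by rw [hc.eq_iff, add_sub_add_left_eq_sub]

theorem exists_isPath (hc : IsShortestCycle G c) (i : ℤ) {m : ℕ} (hm : m < G.girth) :
    ∃ p : G.Walk (c i) (c (i + m)), p.IsPath ∧ p.length = m ∧
      ∀ w ∈ p.support, ∃ j : ℕ, j ≤ m ∧ w = c (i + j) := by
  induction m with
  | zero => exact ⟨Walk.nil.copy rfl (by simp), by simp, by simp, by simp⟩
  | succ m ih =>
    obtain ⟨p, hp, hlen, hsupp⟩ := ih (by omega)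
    have hadj : G.Adj (c (i + m)) (c (i + (m + 1 : ℕ))) := by
      rw [Nat.cast_succ, ← add_assoc]
      exact hc.adj _
    refine ⟨p.concat hadj, hp.concat (fun h => ?_) hadj, by rw [Walk.length_concat, hlen],
      fun w hw => ?_⟩
    · obtain ⟨j, hj, h⟩ := hsupp _ h
      exact hc.ne_of_lt (by omega) (by omega) h.symm
    · rw [Walk.support_concat, List.mem_append, List.mem_singleton] at hw
      rcases hw with hw | rfl
      · obtain ⟨j, hj, h⟩ := hsupp w hw
        exact ⟨j, by omega, h⟩
      · exact ⟨m + 1, le_rfl, rfl⟩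

theorem dist_eq (hc : IsShortestCycle G c) (i : ℤ) {m : ℕ} (hm : 2 * m ≤ G.girth) :
    G.dist (c i) (c (i + m)) = m := by
  have h3 := hc.three_le_girth
  obtain ⟨p, hp, hlen, -⟩ := hc.exists_isPath i (m := m) (by omega)
  rw [← length_eq_dist_of_two_mul_le_girth hp (by omega), hlen]

theorem dist_eq_of_adj_right (hc : IsShortestCycle G c) {i : ℤ} {m : ℕ} {w : V}
    (hm : 2 * (m + 1) ≤ G.girth) (hw : G.Adj (c (i + m)) w) (hwc : w ∉ Set.range c) :
    G.dist w (c i) = m + 1 := by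
  obtain ⟨p, hp, hlen, hsupp⟩ := hc.exists_isPath i (m := m) (by omega)
  have hpw : (p.concat hw).IsPath := hp.concat (fun h => by
    obtain ⟨j, -, rfl⟩ := hsupp w h
    exact hwc ⟨_, rfl⟩) hw
  have hlen' : (p.concat hw).length = m + 1 := by rw [Walk.length_concat, hlen]
  rw [dist_comm, ← length_eq_dist_of_two_mul_le_girth hpw (by omega), hlen']

theorem dist_eq_of_adj_left (hc : IsShortestCycle G c) {i : ℤ} {m : ℕ} {w : V}
    (hm : 2 * (m + 1) ≤ G.girth) (hw : G.Adj (c i) w) (hwc : w ∉ Set.range c) :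
    G.dist w (c (i + m)) = m + 1 := by
  obtain ⟨p, hp, hlen, hsupp⟩ := hc.exists_isPath i (m := m) (by omega)
  have hpw : (Walk.cons hw.symm p).IsPath := hp.cons fun h => by
    obtain ⟨j, -, rfl⟩ := hsupp w h
    exact hwc ⟨_, rfl⟩
  have hlen' : (Walk.cons hw.symm p).length = m + 1 := by rw [Walk.length_cons, hlen]
  rw [← length_eq_dist_of_two_mul_le_girth hpw (by omega), hlen']

-- The shorter of the two arcs between `x` and `y` starts at one of them.
theorem exists_eq_or_eq (hc : IsShortestCycle G c) {x y : V} (hx : x ∈ Set.range c)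
    (hy : y ∈ Set.range c) : ∃ (i : ℤ) (m : ℕ), 2 * m ≤ G.girth ∧
      (x = c i ∧ y = c (i + m) ∨ y = c i ∧ x = c (i + m)) := by
  obtain ⟨i, rfl⟩ := hx
  obtain ⟨j, rfl⟩ := hy
  have h3 := hc.three_le_girth
  obtain ⟨r, hr, hrg⟩ : ∃ r : ℕ, c (i + r) = c j ∧ r < G.girth := by
    have hnonneg := Int.emod_nonneg (j - i) (b := G.girth) (by omega)
    have hlt := Int.emod_lt_of_pos (j - i) (b := G.girth) (by omega)
    refine ⟨((j - i) % G.girth).toNat, (hc.eq_iff _ _).2 ?_, by omega⟩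
    rw [Int.toNat_of_nonneg hnonneg, ← sub_sub]
    exact Int.dvd_self_sub_emod
  by_cases h : 2 * r ≤ G.girth
  · exact ⟨i, r, h, .inl ⟨rfl, hr.symm⟩⟩
  · refine ⟨i + r, G.girth - r, by omega, .inr ⟨hr.symm, ?_⟩⟩
    rw [Nat.cast_sub hrg.le, add_add_sub_cancel, hc.add_girth]

theorem adj_iff (hc : IsShortestCycle G c) {i j : ℤ} :
    G.Adj (c i) (c j) ↔ c j = c (i + 1) ∨ c i = c (j + 1) := by
  refine ⟨fun h => ?_, ?_⟩
  · obtain ⟨k, m, hm, hij⟩ := hc.exists_eq_or_eq ⟨i, rfl⟩ ⟨j, rfl⟩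
    have hdist := hc.dist_eq k hm
    rcases hij with ⟨hi, hj⟩ | ⟨hj, hi⟩
    · rw [← hi, ← hj, dist_eq_one_iff_adj.2 h] at hdist
      rw [← hdist, Nat.cast_one] at hj
      exact .inl (hj.trans (hc.apply_add_congr hi 1).symm)
    · rw [← hi, ← hj, dist_eq_one_iff_adj.2 h.symm] at hdist
      rw [← hdist, Nat.cast_one] at hi
      exact .inr (hi.trans (hc.apply_add_congr hj 1).symm)
  · rintro (h | h)
    · exact h ▸ hc.adj i
    · exact h ▸ (hc.adj j).symm

theorem visiblePair (hc : IsShortestCycle G c) {X : Set V} (i : ℤ) {m : ℕ}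
    (hm : 2 * m ≤ G.girth) (hX : ∀ j : ℕ, 0 < j → j < m → c (i + j) ∉ X) :
    VisiblePair G X (c i) (c (i + m)) := by
  have h3 := hc.three_le_girth
  obtain ⟨p, hp, hlen, hsupp⟩ := hc.exists_isPath i (m := m) (by omega)
  refine ⟨p, hp, length_eq_dist_of_two_mul_le_girth hp (by omega), fun w hw hwX => ?_⟩
  obtain ⟨j, hj, rfl⟩ := hsupp w hw
  rcases j.eq_zero_or_pos with rfl | hj0
  · exact .inl (by simp)
  · exact .inr (by rw [hj.eq_of_not_lt fun hjm => hX j hj0 hjm hwX])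

end IsShortestCycle

-- Three vertices cutting a shortest cycle into arcs of at most half its length see each other.
theorem three_le_mu_of_not_isAcyclic [Finite V] (hG : ¬G.IsAcyclic) : 3 ≤ mu G := by
  obtain ⟨c, hc⟩ := exists_isShortestCycle hG
  have h3 := hc.three_le_girth
  obtain ⟨h, k, hgirth, hh, hk, hk0⟩ :
      ∃ h k : ℕ, h + k + 1 = G.girth ∧ 2 * h ≤ G.girth ∧ 2 * k ≤ G.girth ∧ 0 < k :=
    ⟨G.girth / 2, G.girth - 1 - G.girth / 2, by omega, by omega, by omega, by omega⟩
  have hper : c (h + k + 1) = c 0 := (hc.eq_iff _ _).2 ⟨-1, by omega⟩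
  have hX : ∀ j : ℤ, 0 < j → j < h + k → j ≠ h → c j ∉ ({c 0, c h, c (h + k)} : Set V) := by
    rintro j hj0 hj hjh (h' | h' | h')
    · exact hc.ne_of_lt hj0 (by omega) h'.symm
    · rcases hjh.lt_or_gt with hlt | hgt
      · exact hc.ne_of_lt hlt (by omega) h'
      · exact hc.ne_of_lt hgt (by omega) h'.symm
    · exact hc.ne_of_lt hj (by omega) h'
  have v₁ : VisiblePair G {c 0, c h, c (h + k)} (c 0) (c h) := by
    simpa only [zero_add] using hc.visiblePair 0 hh fun j hj0 hj => hX _ (by omega) (by omega)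
      (by omega)
  have v₂ : VisiblePair G {c 0, c h, c (h + k)} (c h) (c (h + k)) :=
    hc.visiblePair h hk fun j hj0 hj => hX _ (by omega) (by omega) (by omega)
  have v₃ : VisiblePair G {c 0, c h, c (h + k)} (c (h + k)) (c 0) := by
    rw [← hper]
    exact hc.visiblePair (h + k) (m := 1) (by omega) (by omega)
  have hMV : IsMVSet G {c 0, c h, c (h + k)} := by
    rintro x (rfl | rfl | rfl) y (rfl | rfl | rfl) hxy <;>
      first
      | exact absurd rfl hxy
      | assumption
      | (apply VisiblePair.symm; assumption)
  refine le_of_eq_of_le (Set.ncard_eq_three.2 ⟨c 0, c h, c (h + k), ?_, ?_, ?_, rfl⟩).symm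
    hMV.ncard_le_mu <;> exact hc.ne_of_lt (by omega) (by omega)

end ShortestCycle

section Attachments

variable {V : Type*} {G : SimpleGraph V}

namespace IsShortestCycle

variable {c : ℤ → V}

theorem four_le_mu_of_adj [Finite V] (hconn : G.Connected) (htf : G.CliqueFree 3)
    (hc : IsShortestCycle G c) {i : ℤ} {m : ℕ} (hm0 : 0 < m) (hm : 2 * (m + 1) ≤ G.girth)
    {x y : V} (hx : G.Adj (c i) x) (hxc : x ∉ Set.range c) (hy : G.Adj (c (i + m)) y)
    (hyc : y ∉ Set.range c) : 4 ≤ mu G := by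
  have huv : G.dist (c i) (c (i + m)) = m := hc.dist_eq i (by omega)
  have hpred : G.Adj (c i) (c (i - 1)) := by simpa using (hc.adj (i - 1)).symm
  have hpred_dist : G.dist (c (i - 1)) (c (i + m)) = m + 1 := by
    convert hc.dist_eq (i - 1) hm using 3
    push_cast
    ring
  have hsucc_dist : G.dist (c (i + m + 1)) (c i) = m + 1 := by
    rw [dist_comm, add_assoc]
    exact_mod_cast hc.dist_eq i hm
  have hA : ∀ a ∈ ({x, c (i - 1)} : Set V),
      G.Adj (c i) a ∧ G.dist a (c (i + m)) = G.dist (c i) (c (i + m)) + 1 := by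
    rw [huv]
    rintro a (rfl | rfl)
    exacts [⟨hx, hc.dist_eq_of_adj_left hm hx hxc⟩, ⟨hpred, hpred_dist⟩]
  have hB : ∀ b ∈ ({y, c (i + m + 1)} : Set V),
      G.Adj (c (i + m)) b ∧ G.dist b (c i) = G.dist (c i) (c (i + m)) + 1 := by
    rw [huv]
    rintro b (rfl | rfl)
    exacts [⟨hy, hc.dist_eq_of_adj_right hm hy hyc⟩, ⟨hc.adj _, hsucc_dist⟩]
  have hAB : Disjoint ({x, c (i - 1)} : Set V) {y, c (i + m + 1)} :=
    Set.disjoint_left.2 fun w hwA hwB => by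
      have hw := (hB w hwB).2
      rw [dist_eq_one_iff_adj.2 (hA w hwA).1.symm] at hw
      omega
  have hcard := ncard_add_ncard_le_mu hconn htf hAB hA hB
  rwa [Set.ncard_pair fun h => hxc ⟨_, h.symm⟩, Set.ncard_pair fun h => hyc ⟨_, h.symm⟩] at hcard

theorem antipodal_of_mem_outerBoundary [Finite V] (hconn : G.Connected) (htf : G.CliqueFree 3)
    (hmu : mu G < 4) (hc : IsShortestCycle G c) {x y : V}
    (hx : x ∈ outerBoundary G (Set.range c)ᶜ) (hy : y ∈ outerBoundary G (Set.range c)ᶜ)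
    (hxy : x ≠ y) : ∃ i, x = c i ∧ y = c (i + (G.girth / 2 : ℕ)) ∨
      y = c i ∧ x = c (i + (G.girth / 2 : ℕ)) := by
  obtain ⟨hxc, x', hx'c, hx'⟩ := hx
  obtain ⟨hyc, y', hy'c, hy'⟩ := hy
  obtain ⟨i, m, hm, h⟩ := hc.exists_eq_or_eq (not_not.1 hxc) (not_not.1 hyc)
  have hm0 : 0 < m := Nat.pos_of_ne_zero fun h0 => by
    subst h0
    rw [Nat.cast_zero, add_zero] at h
    rcases h with ⟨h₁, h₂⟩ | ⟨h₁, h₂⟩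
    exacts [hxy (h₁.trans h₂.symm), hxy (h₂.trans h₁.symm)]
  have hmax : ¬2 * (m + 1) ≤ G.girth := fun hle => by
    rcases h with ⟨rfl, rfl⟩ | ⟨rfl, rfl⟩
    · exact hmu.not_ge (hc.four_le_mu_of_adj hconn htf hm0 hle hx'.symm hx'c hy'.symm hy'c)
    · exact hmu.not_ge (hc.four_le_mu_of_adj hconn htf hm0 hle hy'.symm hy'c hx'.symm hx'c)
  obtain rfl : m = G.girth / 2 := by omega
  exact ⟨i, h⟩

theorem outerBoundary_subset_pair [Finite V] (hconn : G.Connected) (htf : G.CliqueFree 3)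
    (hmu : mu G < 4) (hc : IsShortestCycle G c) {i : ℤ}
    (hi : c i ∈ outerBoundary G (Set.range c)ᶜ)
    (hi' : c (i + (G.girth / 2 : ℕ)) ∈ outerBoundary G (Set.range c)ᶜ) :
    outerBoundary G (Set.range c)ᶜ ⊆ {c i, c (i + (G.girth / 2 : ℕ))} := by
  intro z hz
  by_contra hzn
  simp only [Set.mem_insert_iff, Set.mem_singleton_iff, not_or] at hzn
  have hg := four_le_girth htf hc.not_isAcyclic
  obtain ⟨k, ⟨hk, hzk⟩ | ⟨hzk, hk⟩⟩ :=
    hc.antipodal_of_mem_outerBoundary hconn htf hmu hi hz (Ne.symm hzn.1)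
  · exact hzn.2 (hzk.trans (hc.apply_add_congr hk _).symm)
  -- `z` is the other vertex at distance `girth / 2` from `c i`; it equals `c (i + girth / 2)` if
  -- the cycle is even, and is adjacent to it if the cycle is odd.
  have hz_eq : z = c (i + (G.girth - G.girth / 2 : ℕ)) := by
    rw [hzk, hc.apply_add_congr hk, ← hc.add_girth]
    congr 1
    omega
  obtain ⟨j, hj⟩ := hc.antipodal_of_mem_outerBoundary hconn htf hmu hi' hz (Ne.symm hzn.2)
  have hodd : G.girth - G.girth / 2 = G.girth / 2 + 1 := by
    by_contra hne
    exact hzn.2 (by rw [hz_eq]; congr 2; omega)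
  have hadj : G.dist (c (i + (G.girth / 2 : ℕ))) z = 1 := by
    rw [hz_eq, hodd, Nat.cast_succ, ← add_assoc]
    exact dist_eq_one_iff_adj.2 (hc.adj _)
  have hdist := hc.dist_eq j (m := G.girth / 2) (by omega)
  rcases hj with ⟨h₁, h₂⟩ | ⟨h₁, h₂⟩
  · rw [← h₁, ← h₂] at hdist
    omega
  · rw [← h₁, ← h₂, dist_comm] at hdist
    omega

end IsShortestCycle

theorem exists_isShortestCycle_outerBoundary_subset [Finite V] (hconn : G.Connected)
    (htf : G.CliqueFree 3) (hG : ¬G.IsAcyclic) (hmu : mu G < 4) :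
    ∃ c, IsShortestCycle G c ∧
      outerBoundary G (Set.range c)ᶜ ⊆ {c 0, c (G.girth / 2 : ℕ)} := by
  obtain ⟨c, hc⟩ := exists_isShortestCycle hG
  have hrange : ∀ k, Set.range (fun i => c (k + i)) = Set.range c := fun k =>
    (Equiv.addLeft k).surjective.range_comp c
  suffices h : ∃ i, outerBoundary G (Set.range c)ᶜ ⊆ {c i, c (i + (G.girth / 2 : ℕ))} by
    obtain ⟨i, hi⟩ := h
    exact ⟨_, hc.comp_add_left i, by rwa [hrange, add_zero]⟩
  by_cases hsub : (outerBoundary G (Set.range c)ᶜ).Subsingleton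
  · rcases hsub.eq_empty_or_singleton with h | ⟨x, hx⟩
    · exact ⟨0, h ▸ Set.empty_subset _⟩
    · obtain ⟨i, rfl⟩ : x ∈ Set.range c := not_not.1 (hx.ge rfl).1
      exact ⟨i, hx ▸ by simp⟩
  · obtain ⟨x, hx, y, hy, hxy⟩ := Set.not_subsingleton_iff.1 hsub
    obtain ⟨i, ⟨rfl, rfl⟩ | ⟨rfl, rfl⟩⟩ :=
      hc.antipodal_of_mem_outerBoundary hconn htf hmu hx hy hxy
    · exact ⟨i, hc.outerBoundary_subset_pair hconn htf hmu hx hy⟩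
    · exact ⟨i, hc.outerBoundary_subset_pair hconn htf hmu hy hx⟩

end Attachments

section Theta

variable {V : Type*} {G : SimpleGraph V}

theorem visiblePair_of_adj_right {X : Set V} {x v y : V} (hxv : G.Reachable x v)
    (hvy : G.Adj v y)
    (hv : ∀ w ∈ X, w ≠ x → w ≠ y → G.dist x v < G.dist x w + G.dist w v)
    (hy : ∀ w ∈ X, w ≠ x → w ≠ y → G.dist x v < G.dist x w + G.dist w y) :
    VisiblePair G X x y := by
  obtain ⟨p, hp⟩ := hxv.exists_walk_length_eq_dist
  refine visiblePair_of_walk (p.concat hvy) (fun w hw hwX => ?_) fun w hw hwx hwy => ?_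
  · rw [Walk.support_concat, List.mem_append, List.mem_singleton] at hw
    by_contra! hne
    have hle := dist_add_dist_le_length p (hw.resolve_right hne.2)
    exact (hv w hwX hne.1 hne.2).not_ge (hp ▸ hle)
  · rw [Walk.length_concat, hp]
    exact hy w hw hwx hwy

/-- The configuration found in a theta graph with branch vertices `u` and `v`: `z` is a midpoint of
one of the three `u,v`-paths, and `A` holds the neighbours of `v` on the other two. -/
structure IsThetaConfiguration (G : SimpleGraph V) (u v z : V) (A : Set V) : Prop where
  two_le_dist : 2 ≤ G.dist u v
  dist_le_dist : G.dist v z ≤ G.dist u z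
  dist_le_dist_add_one : G.dist u z ≤ G.dist v z + 1
  adj : ∀ a ∈ A, G.Adj v a
  dist_le : ∀ a ∈ A, G.dist u a ≤ G.dist u v
  lt_dist : ∀ a ∈ A, G.dist v z < G.dist z a

namespace IsThetaConfiguration

variable {u v z : V} {A : Set V}

theorem le_dist_add_one (h : IsThetaConfiguration G u v z A) {a : V} (ha : a ∈ A) :
    G.dist u v ≤ G.dist u a + 1 := by
  simpa only [dist_comm (u := u)] using dist_le_dist_add_one_of_adj (h.adj a ha) u

theorem visiblePair_left (hconn : G.Connected) (htf : G.CliqueFree 3)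
    (h : IsThetaConfiguration G u v z A) {x : V} (hx : x = z ∨ x ∈ A) :
    VisiblePair G ({u, z} ∪ A) u x := by
  have huv := h.two_le_dist
  have hzu := h.dist_le_dist_add_one
  have huv_le := hconn.dist_triangle (u := u) (v := z) (w := v)
  rw [dist_comm (u := z)] at huv_le
  refine visiblePair_of_forall_dist_lt (hconn u x) ?_
  rintro w ((rfl | rfl) | hw) hwu hwx
  · contradiction
  · have hxA := hx.resolve_left hwx.symm
    have hux := h.dist_le x hxA
    have hwx := h.lt_dist x hxA
    omega
  · have huw := h.le_dist_add_one hw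
    rcases hx with rfl | hx
    · have hxw := h.lt_dist w hw
      rw [dist_comm (u := w)]
      omega
    · have hux := h.dist_le x hx
      have hwx := dist_eq_two_of_common_neighbor htf (h.adj w hw) (h.adj x hx) hwx
      omega

theorem visiblePair_right (hconn : G.Connected)
    (h : IsThetaConfiguration G u v z A) {a : V} (ha : a ∈ A) :
    VisiblePair G ({u, z} ∪ A) z a := by
  have huv := h.two_le_dist
  have hvz := h.dist_le_dist
  have hua := h.le_dist_add_one ha
  have hza := h.lt_dist a ha
  have hzu := G.dist_comm (u := z) (v := u)
  have hzv := G.dist_comm (u := z) (v := v)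
  refine visiblePair_of_adj_right (hconn z v) (h.adj a ha) ?_ ?_ <;>
    rintro w ((rfl | rfl) | hw) hwz -
  any_goals contradiction
  · omega
  · have hzw := h.lt_dist w hw
    omega
  · omega
  · have hzw := h.lt_dist w hw
    omega

theorem isMVSet (hconn : G.Connected) (htf : G.CliqueFree 3)
    (h : IsThetaConfiguration G u v z A) : IsMVSet G ({u, z} ∪ A) := by
  have huv := h.two_le_dist
  have huz := h.dist_le_dist_add_one
  have hv : v ∉ ({u, z} ∪ A : Set V) := by
    rintro ((rfl | rfl) | hv)
    · rw [dist_self] at huv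
      omega
    · rw [dist_self] at huz
      omega
    · exact (h.adj v hv).ne rfl
  rintro x ((rfl | rfl) | hx) y ((rfl | rfl) | hy) hxy
  any_goals contradiction
  · exact h.visiblePair_left hconn htf (.inl rfl)
  · exact h.visiblePair_left hconn htf (.inr hy)
  · exact (h.visiblePair_left hconn htf (.inl rfl)).symm
  · exact h.visiblePair_right hconn hy
  · exact (h.visiblePair_left hconn htf (.inr hx)).symm
  · exact (h.visiblePair_right hconn hx).symm
  · exact visiblePair_of_common_neighbor hconn (h.adj x hx) (h.adj y hy) hv

theorem two_add_ncard_le_mu [Finite V] (hconn : G.Connected) (htf : G.CliqueFree 3)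
    (h : IsThetaConfiguration G u v z A) : 2 + A.ncard ≤ mu G := by
  have huv := h.two_le_dist
  have hvz := h.dist_le_dist
  have huz := h.dist_le_dist_add_one
  have hne : u ≠ z := by
    rintro rfl
    rw [dist_self, dist_comm] at hvz
    omega
  have hdisj : Disjoint {u, z} A := by
    refine Set.disjoint_left.2 ?_
    rintro a (rfl | rfl) ha
    · have := h.le_dist_add_one ha
      rw [dist_self] at this
      omega
    · have := h.lt_dist a ha
      rw [dist_self] at this
      omega
  rw [← Set.ncard_pair hne, ← Set.ncard_union_eq hdisj]
  exact (h.isMVSet hconn htf).ncard_le_mu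

end IsThetaConfiguration

end Theta

section Behind

variable {V : Type*} {G : SimpleGraph V} {C : Set V} {u v : V}

theorem dist_add_dist_eq_or_of_outerBoundary_subset (hconn : G.Connected)
    (hC : outerBoundary G Cᶜ ⊆ {u, v}) {x y : V} (hx : x ∉ C) (hy : y ∈ C) :
    G.dist x u + G.dist u y = G.dist x y ∨ G.dist x v + G.dist v y = G.dist x y := by
  obtain ⟨z, hz, h⟩ := exists_mem_outerBoundary_dist_add_dist (S := Cᶜ) (hconn x y) hx
    (not_not.2 hy)
  rcases hC hz with rfl | rfl
  exacts [.inl h, .inr h]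

-- Along a geodesic from `x` to `u` the difference `dist u · - dist v ·` drops from a nonnegative
-- value to `-dist u v` in steps of at most two, so it takes the value `0` or `1` on the way.
theorem exists_dist_le_dist_le_add_one (hconn : G.Connected) {x : V} (huv : u ≠ v)
    (hx : G.dist v x ≤ G.dist u x) :
    ∃ z ≠ u, G.dist x z + G.dist z u = G.dist x u ∧
      G.dist v z ≤ G.dist u z ∧ G.dist u z ≤ G.dist v z + 1 := by
  obtain ⟨p, hp⟩ := hconn.exists_walk_length_eq_dist x u
  have hu : ¬G.dist v u ≤ G.dist u u := by
    have := hconn.pos_dist_of_ne huv.symm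
    rw [dist_self]
    omega
  obtain ⟨d, hd, hfst, hsnd⟩ := p.exists_boundary_dart {w | G.dist v w ≤ G.dist u w} hx hu
  rw [Set.mem_ofPred_eq] at hfst hsnd
  have hdu := dist_le_dist_add_one_of_adj d.adj u
  have hdv := dist_le_dist_add_one_of_adj d.adj.symm v
  simp only [dist_comm (v := u), dist_comm (v := v)] at hdu hdv
  have hbetween := dist_add_dist_le_length p (p.dart_fst_mem_support_of_mem_darts hd)
  refine ⟨d.fst, fun h => hu (h ▸ hfst), ?_, hfst, by omega⟩
  exact (hp ▸ hbetween).antisymm hconn.dist_triangle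

theorem dist_eq_add_of_dist_le_dist [Finite V] (hconn : G.Connected) (htf : G.CliqueFree 3)
    (hmu : mu G < 4) (hC : outerBoundary G Cᶜ ⊆ {u, v}) (huv : 2 ≤ G.dist u v) {A : Set V}
    (hAC : A ⊆ C) (hA : ∀ a ∈ A, G.Adj v a ∧ G.dist u a ≤ G.dist u v) (hA2 : 2 ≤ A.ncard)
    {x : V} (hx : x ∉ C) (hvx : G.dist v x ≤ G.dist u x) :
    G.dist u x = G.dist u v + G.dist v x := by
  by_contra hne
  obtain ⟨z, hzu, hxzu, hvz, huz⟩ := exists_dist_le_dist_le_add_one hconn (x := x)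
    (show u ≠ v by rintro rfl; simp at huv) hvx
  have hzpos := hconn.pos_dist_of_ne hzu
  have hzC : z ∉ C := fun hzC => by
    rcases dist_add_dist_eq_or_of_outerBoundary_subset hconn hC hx hzC with h | h
    · rw [dist_comm (u := u) (v := z)] at h
      omega
    · have hvzu := hconn.dist_triangle (u := v) (v := z) (w := u)
      have hxvu := hconn.dist_triangle (u := x) (v := v) (w := u)
      rw [dist_comm (u := u), dist_comm (u := u) (v := v), dist_comm (u := v) (v := x)] at hne
      omega
  have htheta : IsThetaConfiguration G u v z A := by
    refine ⟨huv, hvz, huz, fun a ha => (hA a ha).1, fun a ha => (hA a ha).2, fun a ha => ?_⟩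
    have hva := dist_eq_one_iff_adj.2 (hA a ha).1
    have hua := hconn.dist_triangle (u := u) (v := a) (w := v)
    rw [dist_comm (u := a), hva] at hua
    have := dist_add_dist_eq_or_of_outerBoundary_subset hconn hC hzC (hAC ha)
    rw [hva, dist_comm (u := z) (v := u), dist_comm (u := z) (v := v)] at this
    omega
  have := htheta.two_add_ncard_le_mu hconn htf
  omega

end Behind

section Branches

variable {V : Type*} {G : SimpleGraph V} {C : Set V} {u v : V}

/-- The vertices outside `C` lying behind `u` as seen from `v`: some geodesic from `v` to them
passes through `u`. -/
def verticesBehind (G : SimpleGraph V) (C : Set V) (v u : V) : Set V :=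
  {x | x ∉ C ∧ G.dist v x = G.dist v u + G.dist u x}

theorem compl_subset_verticesBehind_union [Finite V] (hconn : G.Connected) (htf : G.CliqueFree 3)
    (hmu : mu G < 4) (hC : outerBoundary G Cᶜ ⊆ {u, v}) (huv : 2 ≤ G.dist u v) {A B : Set V}
    (hAC : A ⊆ C) (hA : ∀ a ∈ A, G.Adj u a ∧ G.dist v a ≤ G.dist v u) (hA2 : 2 ≤ A.ncard)
    (hBC : B ⊆ C) (hB : ∀ b ∈ B, G.Adj v b ∧ G.dist u b ≤ G.dist u v) (hB2 : 2 ≤ B.ncard) :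
    Cᶜ ⊆ verticesBehind G C v u ∪ verticesBehind G C u v := by
  intro x hx
  rcases le_total (G.dist u x) (G.dist v x) with h | h
  · rw [Set.pair_comm] at hC
    rw [dist_comm] at huv
    exact .inl ⟨hx, dist_eq_add_of_dist_le_dist hconn htf hmu hC huv hAC hA hA2 hx h⟩
  · exact .inr ⟨hx, dist_eq_add_of_dist_le_dist hconn htf hmu hC huv hBC hB hB2 hx h⟩

theorem disjoint_verticesBehind (huv : G.dist u v ≠ 0) :
    Disjoint (verticesBehind G C v u) (verticesBehind G C u v) := by
  refine Set.disjoint_left.2 fun x hxu hxv => ?_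
  have hvx := hxu.2
  have hux := hxv.2
  rw [dist_comm (u := v) (v := u)] at hvx
  omega

theorem outerBoundary_verticesBehind_subset (hC : outerBoundary G Cᶜ ⊆ {u, v})
    (huv : 2 ≤ G.dist u v) (hcov : Cᶜ ⊆ verticesBehind G C v u ∪ verticesBehind G C u v) :
    outerBoundary G (verticesBehind G C v u) ⊆ {u} := by
  rintro y ⟨hyT, x, ⟨hxC, hvx⟩, hxy⟩
  rw [dist_comm (u := v) (v := u)] at hvx
  by_cases hyC : y ∈ C
  · refine (hC ⟨not_not.2 hyC, x, hxC, hxy⟩).resolve_right ?_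
    rintro rfl
    rw [dist_eq_one_iff_adj.2 hxy.symm] at hvx
    omega
  · have huy := ((hcov hyC).resolve_left hyT).2
    have hux := dist_le_dist_add_one_of_adj hxy.symm u
    have hvy := dist_le_dist_add_one_of_adj hxy v
    rw [dist_comm (u := y), dist_comm (u := x)] at hux
    rw [dist_comm (u := x), dist_comm (u := y)] at hvy
    omega

variable {T : Set V}

theorem dist_add_dist_of_outerBoundary_subset_singleton (hconn : G.Connected)
    (hT : outerBoundary G T ⊆ {u}) {x y : V} (hx : x ∈ T) (hy : y ∉ T) :
    G.dist x u + G.dist u y = G.dist x y := by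
  obtain ⟨z, hz, h⟩ := exists_mem_outerBoundary_dist_add_dist (hconn x y) hx hy
  rwa [hT hz] at h

theorem exists_adj_dist_add_one_eq_of_mem (hconn : G.Connected) (hT : outerBoundary G T ⊆ {u})
    (hu : u ∉ T) {x : V} (hx : x ∈ T) :
    ∃ w, (w ∈ T ∨ w = u) ∧ G.Adj w x ∧ G.dist u w + 1 = G.dist u x := by
  obtain ⟨w, hxw, hw⟩ := exists_adj_dist_add_one_eq (hconn x u) (ne_of_mem_of_not_mem hx hu)
  refine ⟨w, or_iff_not_imp_left.2 fun hwT => hT ⟨hwT, x, hx, hxw⟩, hxw.symm, ?_⟩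
  rwa [dist_comm (u := u), dist_comm (u := u)]

theorem eq_of_adj_of_outerBoundary_subset [Finite V] (hconn : G.Connected) (htf : G.CliqueFree 3)
    (hmu : mu G < 4) (hT : outerBoundary G T ⊆ {u}) {A : Set V} (hAT : Disjoint A T)
    (hA : ∀ a ∈ A, G.Adj u a) (hA2 : 2 ≤ A.ncard) {w x y : V} (hw : w ∈ T ∨ w = u)
    (hx : x ∈ T) (hy : y ∈ T) (hwx : G.Adj w x) (hwy : G.Adj w y)
    (hux : G.dist u w + 1 = G.dist u x) (huy : G.dist u w + 1 = G.dist u y) : x = y := by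
  by_contra hne
  have hAw : ∀ a ∈ A, G.dist a w = G.dist u w + 1 := by
    intro a ha
    rw [dist_comm (u := a), dist_comm (u := u)]
    rcases hw with hw | rfl
    · rw [← dist_add_dist_of_outerBoundary_subset_singleton hconn hT hw
        (Set.disjoint_left.1 hAT ha), dist_eq_one_iff_adj.2 (hA a ha)]
    · rw [dist_self, dist_eq_one_iff_adj.2 (hA a ha)]
  have hxy : ∀ b ∈ ({x, y} : Set V), G.Adj w b ∧ G.dist b u = G.dist u w + 1 := by
    rintro b (rfl | rfl)
    · exact ⟨hwx, by rw [dist_comm, hux]⟩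
    · exact ⟨hwy, by rw [dist_comm, huy]⟩
  have hdisj : Disjoint A {x, y} := hAT.mono_right (Set.pair_subset hx hy)
  have := ncard_add_ncard_le_mu hconn htf hdisj (fun a ha => ⟨hA a ha, hAw a ha⟩) hxy
  rw [Set.ncard_pair hne] at this
  omega

theorem injOn_dist_of_outerBoundary_subset [Finite V] (hconn : G.Connected)
    (htf : G.CliqueFree 3) (hmu : mu G < 4) (hT : outerBoundary G T ⊆ {u}) (hu : u ∉ T)
    {A : Set V} (hAT : Disjoint A T) (hA : ∀ a ∈ A, G.Adj u a) (hA2 : 2 ≤ A.ncard) :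
    T.InjOn (G.dist u) := by
  suffices h : ∀ n, ∀ x ∈ T, ∀ y ∈ T, G.dist u x = n → G.dist u y = n → x = y from
    fun x hx y hy hxy => h _ x hx y hy hxy rfl
  intro n
  induction n with
  | zero =>
    intro x hx y _ hux _
    exact absurd (hconn.dist_eq_zero_iff.1 hux ▸ hx) hu
  | succ n ih =>
    intro x hx y hy hux huy
    obtain ⟨w, hw, hwx, huw⟩ := exists_adj_dist_add_one_eq_of_mem hconn hT hu hx
    obtain ⟨w', hw', hwy, huw'⟩ := exists_adj_dist_add_one_eq_of_mem hconn hT hu hy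
    have hdist : G.dist u w = G.dist u w' := by omega
    obtain rfl : w = w' := by
      rcases hw with hw | rfl
      · rcases hw' with hw' | rfl
        · exact ih w hw w' hw' (by omega) (by omega)
        · rw [dist_self] at hdist
          exact (hconn.dist_eq_zero_iff.1 hdist).symm
      · rw [dist_self] at hdist
        exact hconn.dist_eq_zero_iff.1 hdist.symm
    exact eq_of_adj_of_outerBoundary_subset hconn htf hmu hT hAT hA hA2 hw hx hy hwx hwy huw huw'

theorem exists_enumeration_of_injOn {α : Type*} {T : Set α} (hT : T.Finite) {f : α → ℕ}
    (hf : T.InjOn f) (hpred : ∀ n, ∀ x ∈ T, f x = n + 1 → ∃ y ∈ T, f y = n) :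
    ∃ (a : ℕ) (e : Fin a → α), Set.range e = T ∧ ∀ k, f (e k) = k := by
  classical
  have hex := (hT.image f).exists_notMem
  have hlower : ∀ n, n ∉ f '' T → ∀ x ∈ T, f x < n := by
    refine fun n hn x hx => lt_of_not_ge fun hle => hn ?_
    clear hn
    induction hle using Nat.decreasingInduction with
    | of_succ k _ ih =>
      obtain ⟨y, hy, hyk⟩ := ih
      exact hpred k y hy hyk
    | self => exact ⟨x, hx, rfl⟩
  have hmem : ∀ k : Fin (Nat.find hex), ∃ x ∈ T, f x = k := fun k =>
    not_not.1 (Nat.find_min hex k.2)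
  choose e heT he using hmem
  refine ⟨_, e, (Set.range_subset_iff.2 heT).antisymm fun x hx => ?_, he⟩
  exact ⟨⟨f x, hlower _ (Nat.find_spec hex) x hx⟩, hf (heT _) hx (he _)⟩

theorem exists_mem_adj_of_dist_eq_add_two (hconn : G.Connected) (hT : outerBoundary G T ⊆ {u})
    (hu : u ∉ T) {n : ℕ} {x : V} (hx : x ∈ T) (hux : G.dist u x = n + 2) :
    ∃ w ∈ T, G.Adj w x ∧ G.dist u w = n + 1 := by
  obtain ⟨w, hw, hwx, huw⟩ := exists_adj_dist_add_one_eq_of_mem hconn hT hu hx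
  refine ⟨w, hw.resolve_right ?_, hwx, by omega⟩
  rintro rfl
  rw [dist_self] at huw
  omega

theorem exists_enumeration_dist_eq_add_one [Finite V] (hconn : G.Connected)
    (hT : outerBoundary G T ⊆ {u}) (hu : u ∉ T) (hinj : T.InjOn (G.dist u)) :
    ∃ (a : ℕ) (e : Fin a → V), Set.range e = T ∧ ∀ k, G.dist u (e k) = k + 1 := by
  have hpos : ∀ x ∈ T, G.dist u x = G.dist u x - 1 + 1 := fun x hx =>
    (Nat.sub_one_add_one (hconn.pos_dist_of_ne (ne_of_mem_of_not_mem hx hu).symm).ne').symm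
  obtain ⟨a, e, rfl, he⟩ := exists_enumeration_of_injOn T.toFinite (f := fun x => G.dist u x - 1)
    (fun x hx y hy hxy => hinj hx hy (by rw [hpos x hx, hpos y hy]; exact congrArg (· + 1) hxy))
    fun n x hx hux => by
      obtain ⟨w, hw, -, huw⟩ := exists_mem_adj_of_dist_eq_add_two hconn hT hu hx (n := n) (by omega)
      exact ⟨w, hw, by omega⟩
  exact ⟨a, e, rfl, fun k => by rw [hpos _ ⟨k, rfl⟩, he]⟩

theorem exists_pathGraph_embedding_of_injOn_dist [Finite V] (hconn : G.Connected)
    (hT : outerBoundary G T ⊆ {u}) (hu : u ∉ T) (hinj : T.InjOn (G.dist u)) :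
    ∃ (a : ℕ) (e : pathGraph a ↪g G), Set.range e = T ∧ ∀ k, G.Adj u (e k) ↔ (k : ℕ) = 0 := by
  obtain ⟨a, e, rfl, he⟩ := exists_enumeration_dist_eq_add_one hconn hT hu hinj
  have he_inj : Function.Injective e := fun k l hkl => by
    have := he k
    rw [hkl, he] at this
    exact Fin.ext (by omega)
  have hsucc : ∀ k l : Fin a, (k : ℕ) + 1 = l → G.Adj (e k) (e l) := by
    intro k l hkl
    obtain ⟨_, ⟨j, rfl⟩, hjl, hj⟩ :=
      exists_mem_adj_of_dist_eq_add_two hconn hT hu (n := k) ⟨l, rfl⟩ (by rw [he, ← hkl])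
    rw [he] at hj
    rwa [Fin.ext (show (j : ℕ) = k by omega)] at hjl
  have hadj : ∀ {k l}, G.Adj (e k) (e l) ↔ (pathGraph a).Adj k l := by
    refine fun {k l} => ⟨fun h => ?_, fun h => ?_⟩
    · have hkl := dist_le_dist_add_one_of_adj h u
      have hlk := dist_le_dist_add_one_of_adj h.symm u
      have hne : (k : ℕ) ≠ l := fun hkl => h.ne (congrArg e (Fin.ext hkl))
      rw [SimpleGraph.dist_comm, he, SimpleGraph.dist_comm, he] at hkl hlk
      rw [pathGraph_adj]
      omega
    · rcases pathGraph_adj.1 h with h | h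
      exacts [hsucc k l h, (hsucc l k h).symm]
  refine ⟨a, ⟨⟨e, he_inj⟩, hadj⟩, rfl, fun k => ?_⟩
  rw [← dist_eq_one_iff_adj]
  exact (he k).congr_left.trans (by omega)

theorem exists_pathGraph_embedding [Finite V] (hconn : G.Connected) (htf : G.CliqueFree 3)
    (hmu : mu G < 4) (hT : outerBoundary G T ⊆ {u}) (hu : u ∉ T) {A : Set V} (hAT : Disjoint A T)
    (hA : ∀ a ∈ A, G.Adj u a) (hA2 : 2 ≤ A.ncard) :
    ∃ (a : ℕ) (e : pathGraph a ↪g G), Set.range e = T ∧ ∀ k, G.Adj u (e k) ↔ (k : ℕ) = 0 :=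
  exists_pathGraph_embedding_of_injOn_dist hconn hT hu
    (injOn_dist_of_outerBoundary_subset hconn htf hmu hT hu hAT hA hA2)

end Branches

section Recognition

variable {n a b : ℕ}

theorem frogGraph.adj_inl_inl (hn : 2 ≤ n) {i j : Fin n} :
    (frogGraph n a b).Adj (Sum.inl i) (Sum.inl j) ↔
      (j : ℕ) = (i + 1) % n ∨ (i : ℕ) = (j + 1) % n := by
  have hne : ∀ k : Fin n, (k : ℕ) ≠ (k + 1) % n := fun k => by
    rcases (show (k : ℕ) + 1 ≤ n from k.2).lt_or_eq with h | h
    · rw [Nat.mod_eq_of_lt h]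
      omega
    · rw [h, Nat.mod_self]
      omega
  simp only [frogGraph, fromRel_adj, ne_eq, Sum.inl.injEq, and_iff_right_iff_imp]
  rintro (h | h) rfl <;> exact hne _ h

theorem frogGraph.adj_inl_inr_inl {i : Fin n} {k : Fin a} :
    (frogGraph n a b).Adj (Sum.inl i) (Sum.inr (Sum.inl k)) ↔ (i : ℕ) = 0 ∧ (k : ℕ) = 0 := by
  simp [frogGraph]

theorem frogGraph.adj_inl_inr_inr {i : Fin n} {k : Fin b} :
    (frogGraph n a b).Adj (Sum.inl i) (Sum.inr (Sum.inr k)) ↔ (i : ℕ) = n / 2 ∧ (k : ℕ) = 0 := by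
  simp [frogGraph]

theorem frogGraph.adj_inr_inl_inr_inl {k l : Fin a} :
    (frogGraph n a b).Adj (Sum.inr (Sum.inl k)) (Sum.inr (Sum.inl l)) ↔
      (pathGraph a).Adj k l := by
  simp only [frogGraph, fromRel_adj, pathGraph_adj, ne_eq, Sum.inr.injEq, Sum.inl.injEq]
  omega

theorem frogGraph.adj_inr_inr_inr_inr {k l : Fin b} :
    (frogGraph n a b).Adj (Sum.inr (Sum.inr k)) (Sum.inr (Sum.inr l)) ↔
      (pathGraph b).Adj k l := by
  simp only [frogGraph, fromRel_adj, pathGraph_adj, ne_eq, Sum.inr.injEq]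
  omega

theorem frogGraph.not_adj_inr_inl_inr_inr {k : Fin a} {l : Fin b} :
    ¬(frogGraph n a b).Adj (Sum.inr (Sum.inl k)) (Sum.inr (Sum.inr l)) := by
  simp [frogGraph]

variable {V : Type*} {G : SimpleGraph V}

theorem isFrog_of_bijective (hn : 3 ≤ n) {c : Fin n → V} {e₁ : pathGraph a ↪g G}
    {e₂ : pathGraph b ↪g G} (hbij : Function.Bijective (Sum.elim c (Sum.elim e₁ e₂)))
    (hc : ∀ i j, G.Adj (c i) (c j) ↔ (j : ℕ) = (i + 1) % n ∨ (i : ℕ) = (j + 1) % n)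
    (h₁ : ∀ i k, G.Adj (c i) (e₁ k) ↔ (i : ℕ) = 0 ∧ (k : ℕ) = 0)
    (h₂ : ∀ i k, G.Adj (c i) (e₂ k) ↔ (i : ℕ) = n / 2 ∧ (k : ℕ) = 0)
    (h₁₂ : ∀ k l, ¬G.Adj (e₁ k) (e₂ l)) : IsFrog G := by
  refine ⟨n, a, b, hn, ⟨RelIso.symm ⟨Equiv.ofBijective _ hbij, ?_⟩⟩⟩
  rintro (i | k | k) (j | l | l)
  · exact (hc i j).trans (frogGraph.adj_inl_inl (by omega)).symm
  · exact (h₁ i l).trans frogGraph.adj_inl_inr_inl.symm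
  · exact (h₂ i l).trans frogGraph.adj_inl_inr_inr.symm
  · rw [adj_comm, (frogGraph n a b).adj_comm]
    exact (h₁ j k).trans frogGraph.adj_inl_inr_inl.symm
  · exact e₁.map_rel_iff.trans frogGraph.adj_inr_inl_inr_inl.symm
  · exact iff_of_false (h₁₂ k l) frogGraph.not_adj_inr_inl_inr_inr
  · rw [adj_comm, (frogGraph n a b).adj_comm]
    exact (h₂ j k).trans frogGraph.adj_inl_inr_inr.symm
  · exact iff_of_false (fun h => h₁₂ l k h.symm) fun h =>
      frogGraph.not_adj_inr_inl_inr_inr h.symm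
  · exact e₂.map_rel_iff.trans frogGraph.adj_inr_inr_inr_inr.symm

theorem adj_iff_of_outerBoundary_subset {e : pathGraph a ↪g G} {u x : V}
    (hx : x ∉ Set.range e) (he : outerBoundary G (Set.range e) ⊆ {u})
    (hu : ∀ k, G.Adj u (e k) ↔ (k : ℕ) = 0) (k : Fin a) :
    G.Adj x (e k) ↔ x = u ∧ (k : ℕ) = 0 := by
  refine ⟨fun h => ?_, fun h => h.1 ▸ (hu k).2 h.2⟩
  obtain rfl : x = u := he ⟨hx, e k, ⟨k, rfl⟩, h.symm⟩
  exact ⟨rfl, (hu k).1 h⟩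

theorem isFrog_of_outerBoundary_subset (hn : 3 ≤ n) {c : Fin n → V}
    (hinj : Function.Injective c)
    (hc : ∀ i j, G.Adj (c i) (c j) ↔ (j : ℕ) = (i + 1) % n ∨ (i : ℕ) = (j + 1) % n)
    {S T : Set V} (hST : S ∪ T = (Set.range c)ᶜ) (hdisj : Disjoint S T)
    {e₁ : pathGraph a ↪g G} {e₂ : pathGraph b ↪g G} (he₁ : Set.range e₁ = S)
    (he₂ : Set.range e₂ = T) {i₁ i₂ : Fin n} (hi₁ : (i₁ : ℕ) = 0) (hi₂ : (i₂ : ℕ) = n / 2)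
    (hS : outerBoundary G S ⊆ {c i₁}) (hT : outerBoundary G T ⊆ {c i₂})
    (h₁ : ∀ k, G.Adj (c i₁) (e₁ k) ↔ (k : ℕ) = 0) (h₂ : ∀ k, G.Adj (c i₂) (e₂ k) ↔ (k : ℕ) = 0) :
    IsFrog G := by
  subst he₁ he₂
  have hcS : ∀ i, c i ∉ Set.range e₁ := fun i h => hST.le (.inl h) ⟨i, rfl⟩
  have hcT : ∀ i, c i ∉ Set.range e₂ := fun i h => hST.le (.inr h) ⟨i, rfl⟩
  have he₂S : ∀ k, e₂ k ∉ Set.range e₁ := fun k h => Set.disjoint_left.1 hdisj h ⟨k, rfl⟩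
  refine isFrog_of_bijective (e₁ := e₁) (e₂ := e₂) hn ⟨?_, ?_⟩ hc (fun i k => ?_)
    (fun i k => ?_) fun k l h => ?_
  · refine hinj.sumElim (e₁.injective.sumElim e₂.injective fun k l h => he₂S l ⟨k, h⟩) ?_
    rintro i (k | k) h
    · exact hcS i ⟨k, h.symm⟩
    · exact hcT i ⟨k, h.symm⟩
  · rw [← Set.range_eq_univ, Set.Sum.elim_range, Set.Sum.elim_range, hST, Set.union_compl_self]
  · rw [adj_iff_of_outerBoundary_subset (hcS i) hS h₁, hinj.eq_iff, Fin.ext_iff, hi₁]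
  · rw [adj_iff_of_outerBoundary_subset (hcT i) hT h₂, hinj.eq_iff, Fin.ext_iff, hi₂]
  · have hl : e₂ l = c i₁ := hS ⟨he₂S l, e₁ k, ⟨k, rfl⟩, h⟩
    exact hcT i₁ ⟨l, hl⟩

end Recognition

section Frog

variable {V : Type*} {G : SimpleGraph V} {c : ℤ → V}

namespace IsShortestCycle

theorem dist_le (hc : IsShortestCycle G c) {x y : V} (hx : x ∈ Set.range c)
    (hy : y ∈ Set.range c) : G.dist x y ≤ G.girth / 2 := by
  obtain ⟨i, m, hm, ⟨rfl, rfl⟩ | ⟨rfl, rfl⟩⟩ := hc.exists_eq_or_eq hx hy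
  · rw [hc.dist_eq i hm]
    omega
  · rw [SimpleGraph.dist_comm, hc.dist_eq i hm]
    omega

theorem exists_subset_neighborSet (hc : IsShortestCycle G c) {x : V} (hx : x ∈ Set.range c) :
    ∃ A ⊆ Set.range c, (∀ a ∈ A, G.Adj x a) ∧ A.ncard = 2 := by
  obtain ⟨i, rfl⟩ := hx
  have h3 := hc.three_le_girth
  refine ⟨{c (i - 1), c (i + 1)}, Set.pair_subset ⟨_, rfl⟩ ⟨_, rfl⟩, ?_,
    Set.ncard_pair (hc.ne_of_lt (by omega) (by omega))⟩
  rintro a (rfl | rfl)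
  · simpa only [sub_add_cancel] using (hc.adj (i - 1)).symm
  · exact hc.adj i

theorem apply_natCast_eq_iff (hc : IsShortestCycle G c) {i j : ℕ} (hj : j < G.girth) :
    c j = c i ↔ j = i % G.girth := by
  rw [hc.eq_iff, ← Int.modEq_iff_dvd, Int.natCast_modEq_iff, Nat.ModEq, Nat.mod_eq_of_lt hj]

theorem range_comp_fin (hc : IsShortestCycle G c) :
    Set.range (fun i : Fin G.girth => c (i : ℕ)) = Set.range c := by
  have h3 := hc.three_le_girth
  refine Set.Subset.antisymm (Set.range_subset_iff.2 fun i => ⟨_, rfl⟩)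
    (Set.range_subset_iff.2 fun i => ?_)
  have hnonneg := Int.emod_nonneg i (b := G.girth) (by omega)
  have hlt := Int.emod_lt_of_pos i (b := G.girth) (by omega)
  refine ⟨⟨(i % G.girth).toNat, by omega⟩, (hc.eq_iff _ _).2 ?_⟩
  rw [Int.toNat_of_nonneg hnonneg]
  exact Int.dvd_self_sub_emod

end IsShortestCycle

theorem isFrog_of_mu_lt_four [Finite V] (hconn : G.Connected) (htf : G.CliqueFree 3)
    (hG : ¬G.IsAcyclic) (hmu : mu G < 4) : IsFrog G := by
  have h4 := four_le_girth htf hG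
  obtain ⟨c, hc, hC⟩ := exists_isShortestCycle_outerBoundary_subset hconn htf hG hmu
  have hu : c 0 ∈ Set.range c := ⟨0, rfl⟩
  have hv : c (G.girth / 2 : ℕ) ∈ Set.range c := ⟨_, rfl⟩
  have huv : G.dist (c 0) (c (G.girth / 2 : ℕ)) = G.girth / 2 := by
    simpa only [zero_add] using hc.dist_eq 0 (m := G.girth / 2) (by omega)
  have hvu := huv
  rw [SimpleGraph.dist_comm] at hvu
  obtain ⟨A, hAC, hA, hA2⟩ := hc.exists_subset_neighborSet hu
  obtain ⟨B, hBC, hB, hB2⟩ := hc.exists_subset_neighborSet hv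
  have hcov := compl_subset_verticesBehind_union hconn htf hmu hC (by omega)
    hAC (fun a ha => ⟨hA a ha, (hc.dist_le hv (hAC ha)).trans_eq hvu.symm⟩) hA2.ge
    hBC (fun b hb => ⟨hB b hb, (hc.dist_le hu (hBC hb)).trans_eq huv.symm⟩) hB2.ge
  have hS := outerBoundary_verticesBehind_subset hC (by omega) hcov
  have hT := outerBoundary_verticesBehind_subset (Set.pair_comm _ _ ▸ hC) (by omega)
    (Set.union_comm _ _ ▸ hcov)
  obtain ⟨a, e₁, he₁, h₁⟩ := exists_pathGraph_embedding hconn htf hmu hS (fun h => h.1 hu)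
    (Set.disjoint_left.2 fun x hx h => h.1 (hAC hx)) hA hA2.ge
  obtain ⟨b, e₂, he₂, h₂⟩ := exists_pathGraph_embedding hconn htf hmu hT (fun h => h.1 hv)
    (Set.disjoint_left.2 fun x hx h => h.1 (hBC hx)) hB hB2.ge
  refine isFrog_of_outerBoundary_subset (n := G.girth) (c := fun i => c (i : ℕ)) (by omega)
    (fun i j hij => ?_) (fun i j => ?_) ?_ (disjoint_verticesBehind (by omega)) he₁ he₂
    (i₁ := ⟨0, by omega⟩) (i₂ := ⟨G.girth / 2, by omega⟩) rfl rfl hS hT h₁ h₂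
  · rw [hc.apply_natCast_eq_iff i.2, Nat.mod_eq_of_lt j.2] at hij
    exact Fin.ext hij
  · rw [hc.adj_iff, ← hc.apply_natCast_eq_iff j.2, ← hc.apply_natCast_eq_iff i.2, Nat.cast_succ,
      Nat.cast_succ]
  · rw [hc.range_comp_fin]
    exact (Set.union_subset (fun x hx => hx.1) fun x hx => hx.1).antisymm hcov

end Frog

section PendantPaths

variable {V : Type*} {G : SimpleGraph V}

theorem outerBoundary_setOf_depth_lt_subset {F : Set V} {D : V → ℕ} (hinj : F.InjOn D)
    (hF : ∀ v ∈ F, D v ≠ 0 → ∀ w, G.Adj v w → w ∈ F ∧ D v ≤ D w + 1) {x : V} (hx : x ∈ F) :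
    outerBoundary G {v | v ∈ F ∧ D x < D v} ⊆ {x} := by
  rintro w ⟨hw, v, ⟨hvF, hv⟩, hvw⟩
  obtain ⟨hwF, hle⟩ := hF v hvF (by omega) w hvw
  have hwx : ¬D x < D w := fun h => hw ⟨hwF, h⟩
  exact hinj hwF hx (by omega)

theorem IsMVSet.eq_or_eq_of_mem_pendantPath {X F : Set V} (hX : IsMVSet G X) {D : V → ℕ}
    (hinj : F.InjOn D)
    (hF : ∀ v ∈ F, D v ≠ 0 → ∀ w, G.Adj v w → w ∈ F ∧ D v ≤ D w + 1) {x y z : V} (hx : x ∈ X)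
    (hy : y ∈ X) (hz : z ∈ X) (hxF : x ∈ F) (hyF : y ∈ F) (hxy : x ≠ y) : z = x ∨ z = y := by
  have hcut : ∀ x ∈ X, x ∈ F → ∀ y ∈ X, y ∈ F → D x < D y → ∀ z ∈ X, (z ∈ F → D z ≤ D x) →
      z = x := by
    intro x hx hxF y hy hyF hlt z hz hzF
    obtain ⟨w, hw, hwz⟩ := hX.exists_mem_outerBoundary hy
      (show y ∈ {v | v ∈ F ∧ D x < D v} from ⟨hyF, hlt⟩) hz fun h => (hzF h.1).not_gt h.2
    obtain rfl : w = x := outerBoundary_setOf_depth_lt_subset hinj hF hxF hw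
    exact (hwz hx).symm
  wlog hlt : D x < D y generalizing x y
  · have hne := hinj.ne hxF hyF hxy
    exact (this hy hx hyF hxF hxy.symm (by omega)).symm
  by_contra! hne
  by_cases hzx : z ∈ F → D z ≤ D x
  · exact hne.1 (hcut x hx hxF y hy hyF hlt z hz hzx)
  · push Not at hzx
    obtain ⟨hzF, hxz⟩ := hzx
    rcases (hinj.ne hzF hyF hne.2).lt_or_gt with h | h
    · exact hne.1 (hcut z hz hzF y hy hyF h x hx fun _ => hxz.le).symm
    · exact hxy (hcut y hy hyF z hz hzF h x hx fun _ => hlt.le)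

theorem exists_walk_length_eq_of_descent {f : V → ℕ} {o : V}
    (hf : ∀ v, v ≠ o → ∃ w, G.Adj v w ∧ f v = f w + 1) (ho : f o = 0) (v : V) :
    ∃ p : G.Walk v o, p.length = f v := by
  induction hv : f v generalizing v with
  | zero =>
    by_cases h : v = o
    · exact h ▸ ⟨Walk.nil, rfl⟩
    · obtain ⟨w, -, hw⟩ := hf v h
      omega
  | succ k ih =>
    obtain ⟨w, hvw, hw⟩ := hf v (by rintro rfl; omega)
    obtain ⟨p, hp⟩ := ih w (by omega)
    exact ⟨Walk.cons hvw p, by rw [Walk.length_cons, hp]⟩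

theorem le_add_length_of_forall_adj {f : V → ℕ} (hf : ∀ v w, G.Adj v w → f v ≤ f w + 1)
    {v w : V} (p : G.Walk v w) : f v ≤ f w + p.length := by
  induction p with
  | nil => exact le_rfl
  | cons h p ih =>
    rw [Walk.length_cons]
    have := hf _ _ h
    omega

end PendantPaths

namespace frogGraph

variable {n a b : ℕ}

/-- The index of the cycle vertex of a frog graph nearest to a given vertex. -/
def pos : Fin n ⊕ (Fin a ⊕ Fin b) → ℕ
  | Sum.inl i => i
  | Sum.inr (Sum.inl _) => 0
  | Sum.inr (Sum.inr _) => n / 2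

/-- The distance to the cycle along the tail at the cycle vertex `0`, and zero off that tail. -/
def depthFst : Fin n ⊕ (Fin a ⊕ Fin b) → ℕ
  | Sum.inl _ => 0
  | Sum.inr (Sum.inl k) => k + 1
  | Sum.inr (Sum.inr _) => 0

/-- The distance to the cycle along the tail at the cycle vertex `n / 2`, and zero off that
tail. -/
def depthSnd : Fin n ⊕ (Fin a ⊕ Fin b) → ℕ
  | Sum.inl _ => 0
  | Sum.inr (Sum.inl _) => 0
  | Sum.inr (Sum.inr k) => k + 1

theorem pos_lt (hn : 3 ≤ n) (v : Fin n ⊕ (Fin a ⊕ Fin b)) : pos v < n := by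
  rcases v with i | _ | _
  · exact i.2
  · exact (show 0 < n by omega)
  · exact (show n / 2 < n by omega)

theorem pos_eq_zero {v : Fin n ⊕ (Fin a ⊕ Fin b)} (hv : depthFst v ≠ 0) : pos v = 0 := by
  rcases v with i | k | k
  exacts [absurd rfl hv, rfl, absurd rfl hv]

theorem pos_eq_half {v : Fin n ⊕ (Fin a ⊕ Fin b)} (hv : depthSnd v ≠ 0) : pos v = n / 2 := by
  rcases v with i | k | k
  exacts [absurd rfl hv, absurd rfl hv, rfl]

theorem ext {v w : Fin n ⊕ (Fin a ⊕ Fin b)} (hpos : pos v = pos w)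
    (hfst : depthFst v = depthFst w) (hsnd : depthSnd v = depthSnd w) : v = w := by
  rcases v with i | k | k <;> rcases w with j | l | l <;>
    grind [pos, depthFst, depthSnd]

theorem adj_iff (hn : 3 ≤ n) {v w : Fin n ⊕ (Fin a ⊕ Fin b)} :
    (frogGraph n a b).Adj v w ↔
      (depthFst v = 0 ∧ depthSnd v = 0 ∧ depthFst w = 0 ∧ depthSnd w = 0 ∧
        (pos w = pos v + 1 ∨ pos v = pos w + 1 ∨
          pos v = 0 ∧ pos w + 1 = n ∨ pos w = 0 ∧ pos v + 1 = n)) ∨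
      (pos v = pos w ∧ depthSnd v = depthSnd w ∧
        (depthFst w = depthFst v + 1 ∨ depthFst v = depthFst w + 1)) ∨
      (pos v = pos w ∧ depthFst v = depthFst w ∧
        (depthSnd w = depthSnd v + 1 ∨ depthSnd v = depthSnd w + 1)) := by
  have hmod : ∀ i j : Fin n,
      (j : ℕ) = (i + 1) % n ↔ (j : ℕ) = i + 1 ∨ (j : ℕ) = 0 ∧ (i : ℕ) + 1 = n := by
    intro i j
    rcases (show (i : ℕ) + 1 ≤ n from i.2).lt_or_eq with h | h
    · rw [Nat.mod_eq_of_lt h]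
      omega
    · rw [h, Nat.mod_self]
      omega
  rcases v with i | k | k <;> rcases w with j | l | l <;>
    simp only [frogGraph, fromRel_adj, pos, depthFst, depthSnd, hmod, ne_eq, reduceCtorEq,
      Sum.inl.injEq, Sum.inr.injEq, Fin.ext_iff, not_false_eq_true, true_and, false_and,
      and_false, false_or, or_false] <;>
    omega

theorem depthFst_eq_zero {v : Fin n ⊕ (Fin a ⊕ Fin b)} (hv : pos v ≠ 0) : depthFst v = 0 :=
  not_ne_iff.1 (mt pos_eq_zero hv)

theorem depthSnd_eq_zero {v : Fin n ⊕ (Fin a ⊕ Fin b)} (hv : pos v ≠ n / 2) : depthSnd v = 0 :=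
  not_ne_iff.1 (mt pos_eq_half hv)

/-- The distance of a vertex of a frog graph to the cycle vertex `0`. -/
def height (v : Fin n ⊕ (Fin a ⊕ Fin b)) : ℕ :=
  depthFst v + min (pos v) (n - pos v) + depthSnd v

theorem exists_adj_height_eq (hn : 3 ≤ n) (v : Fin n ⊕ (Fin a ⊕ Fin b))
    (hv : v ≠ Sum.inl ⟨0, by omega⟩) :
    ∃ w, (frogGraph n a b).Adj v w ∧ height v = height w + 1 := by
  simp only [adj_iff hn, height]
  rcases v with i | k | k
  · have hi : (i : ℕ) ≠ 0 := fun h => hv (congrArg Sum.inl (Fin.ext h))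
    rcases le_or_gt (2 * (i : ℕ)) n with h | h
    · refine ⟨Sum.inl ⟨i - 1, by omega⟩, ?_⟩
      grind [pos, depthFst, depthSnd]
    rcases (show (i : ℕ) + 1 ≤ n from i.2).lt_or_eq with h' | h'
    · refine ⟨Sum.inl ⟨i + 1, h'⟩, ?_⟩
      grind [pos, depthFst, depthSnd]
    · refine ⟨Sum.inl ⟨0, by omega⟩, ?_⟩
      grind [pos, depthFst, depthSnd]
  · by_cases hk : (k : ℕ) = 0
    · refine ⟨Sum.inl ⟨0, by omega⟩, ?_⟩
      grind [pos, depthFst, depthSnd]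
    · refine ⟨Sum.inr (Sum.inl ⟨k - 1, by omega⟩), ?_⟩
      grind [pos, depthFst, depthSnd]
  · by_cases hk : (k : ℕ) = 0
    · refine ⟨Sum.inl ⟨n / 2, by omega⟩, ?_⟩
      grind [pos, depthFst, depthSnd]
    · refine ⟨Sum.inr (Sum.inr ⟨k - 1, by omega⟩), ?_⟩
      grind [pos, depthFst, depthSnd]

theorem exists_walk_length_eq_height (hn : 3 ≤ n) (v : Fin n ⊕ (Fin a ⊕ Fin b)) :
    ∃ p : (frogGraph n a b).Walk v (Sum.inl ⟨0, by omega⟩), p.length = height v :=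
  exists_walk_length_eq_of_descent (exists_adj_height_eq hn)
    (by simp [height, pos, depthFst, depthSnd]) v

theorem preconnected (hn : 3 ≤ n) : (frogGraph n a b).Preconnected := fun v w =>
  have ⟨p, _⟩ := exists_walk_length_eq_height hn v
  have ⟨q, _⟩ := exists_walk_length_eq_height hn w
  ⟨p.append q.reverse⟩

theorem dist_le_height_add_height (hn : 3 ≤ n) (v w : Fin n ⊕ (Fin a ⊕ Fin b)) :
    (frogGraph n a b).dist v w ≤ height v + height w := by
  obtain ⟨p, hp⟩ := exists_walk_length_eq_height hn v
  obtain ⟨q, hq⟩ := exists_walk_length_eq_height hn w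
  calc (frogGraph n a b).dist v w ≤ (p.append q.reverse).length := dist_le _
    _ = height v + height w := by rw [Walk.length_append, Walk.length_reverse, hp, hq]

theorem depthFst_add_half_le_dist (hn : 3 ≤ n) {v w : Fin n ⊕ (Fin a ⊕ Fin b)}
    (hv : depthFst v ≠ 0) (hw : pos w = n / 2) :
    depthFst v + n / 2 ≤ (frogGraph n a b).dist v w := by
  obtain ⟨p, hp⟩ := (preconnected hn v w).exists_walk_length_eq_dist
  have hle := le_add_length_of_forall_adj
    (f := fun v => depthFst v + (n / 2 - min (pos v) (n - pos v)))
    (fun v w hvw => by rw [adj_iff hn] at hvw; omega) p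
  have hv₀ := pos_eq_zero hv
  have hw₀ : depthFst w = 0 := depthFst_eq_zero (by omega)
  simp only [hp, hw₀, hv₀, hw] at hle
  omega

theorem outerBoundary_setOf_pos_subset (hn : 3 ≤ n) {i j : ℕ} (hj : j < n) :
    outerBoundary (frogGraph n a b) {v | i < pos v ∧ pos v < j} ⊆
      {v | (pos v = i ∨ pos v = j) ∧ depthFst v = 0 ∧ depthSnd v = 0} := by
  rintro w ⟨hw, v, hv, hvw⟩
  rw [adj_iff hn] at hvw
  simp only [Set.mem_ofPred_eq] at hw hv ⊢
  omega

theorem not_visiblePair_of_pos_between (hn : 3 ≤ n) {X : Set (Fin n ⊕ (Fin a ⊕ Fin b))}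
    {x y z : Fin n ⊕ (Fin a ⊕ Fin b)} (hz : z ∈ X) (hx : depthFst x ≠ 0)
    (hz₁ : depthFst z = 0) (hz₂ : depthSnd z = 0)
    (hy : n / 2 < pos y ∧ pos y < pos z ∨ pos z < pos y ∧ pos y < n / 2) :
    ¬VisiblePair (frogGraph n a b) X y x := by
  rintro ⟨p, -, hp, hpX⟩
  have hx₀ := pos_eq_zero hx
  have hz₀ := pos_lt hn z
  obtain ⟨w, hwp, hw⟩ := exists_mem_support_mem_outerBoundary p
    (S := {v | min (n / 2) (pos z) < pos v ∧ pos v < max (n / 2) (pos z)})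
    (by simp only [Set.mem_ofPred_eq]; omega) (by simp only [Set.mem_ofPred_eq]; omega)
  obtain ⟨hw₀, hw₁, hw₂⟩ := outerBoundary_setOf_pos_subset hn (by omega) hw
  have hwhalf : pos w = n / 2 := by
    by_contra h
    obtain rfl : w = z := ext (by omega) (by omega) (by omega)
    rcases hpX w hwp hz with rfl | rfl
    · omega
    · exact hx hz₁
  have hwy : 0 < (frogGraph n a b).dist y w :=
    (preconnected hn y w).pos_dist_of_ne (by rintro rfl; omega)
  have hwx := depthFst_add_half_le_dist hn hx hwhalf
  have hlen := dist_add_dist_le_length p hwp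
  have hxy := dist_le_height_add_height hn y x
  have hx₂ : depthSnd x = 0 := depthSnd_eq_zero (by omega)
  have hy₁ : depthFst y = 0 := depthFst_eq_zero (by omega)
  have hy₂ : depthSnd y = 0 := depthSnd_eq_zero (by omega)
  simp only [height] at hxy
  rw [SimpleGraph.dist_comm] at hwx
  omega

theorem not_isMVSet_of_pos_lt (hn : 3 ≤ n) {X : Set (Fin n ⊕ (Fin a ⊕ Fin b))}
    {u v x y : Fin n ⊕ (Fin a ⊕ Fin b)} (hu : u ∈ X) (hv : v ∈ X) (hx : x ∈ X) (hy : y ∈ X)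
    (hux : pos u < pos x) (hxv : pos x < pos v) (hyuv : pos y < pos u ∨ pos v < pos y)
    (hu₁ : depthFst u = 0) (hu₂ : depthSnd u = 0) (hv₁ : depthFst v = 0) (hv₂ : depthSnd v = 0) :
    ¬IsMVSet (frogGraph n a b) X := by
  intro hX
  obtain ⟨w, hw, hwy⟩ := hX.exists_mem_outerBoundary hx
    (S := {w | pos u < pos w ∧ pos w < pos v}) ⟨hux, hxv⟩ hy
    (by simp only [Set.mem_ofPred_eq]; omega)
  obtain ⟨hw₀ | hw₀, hw₁, hw₂⟩ := outerBoundary_setOf_pos_subset hn (pos_lt hn v) hw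
  · obtain rfl : w = u := ext hw₀ (by omega) (by omega)
    obtain rfl := hwy hu
    omega
  · obtain rfl : w = v := ext hw₀ (by omega) (by omega)
    obtain rfl := hwy hv
    omega

theorem injOn_pos (hn : 3 ≤ n) {X : Set (Fin n ⊕ (Fin a ⊕ Fin b))}
    (hX : IsMVSet (frogGraph n a b) X) (hcard : 2 < X.ncard) : X.InjOn pos := by
  intro x hx y hy hxy
  by_contra hne
  suffices h : ∀ z ∈ X, z = x ∨ z = y by
    have hle := Set.ncard_le_ncard (show X ⊆ {x, y} from h)
    rw [Set.ncard_pair hne] at hle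
    omega
  intro z hz
  by_cases hpos : pos x = 0
  · refine hX.eq_or_eq_of_mem_pendantPath (F := {v | pos v = 0}) (D := depthFst) ?_ ?_ hx hy hz
      hpos (hxy.symm.trans hpos) hne
    · intro v hv w hw h
      have hv₂ : depthSnd v = 0 := depthSnd_eq_zero (hv.trans_ne (by omega))
      have hw₂ : depthSnd w = 0 := depthSnd_eq_zero (hw.trans_ne (by omega))
      exact ext (hv.trans hw.symm) h (hv₂.trans hw₂.symm)
    · intro v hv hv₁ w hvw
      rw [adj_iff hn] at hvw
      simp only [Set.mem_ofPred_eq] at hv ⊢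
      omega
  · have hhalf : pos x = n / 2 := by
      by_contra h
      have := depthFst_eq_zero hpos
      have := depthFst_eq_zero (hxy ▸ hpos)
      have := depthSnd_eq_zero h
      have := depthSnd_eq_zero (hxy ▸ h)
      exact hne (ext hxy (by omega) (by omega))
    refine hX.eq_or_eq_of_mem_pendantPath (F := {v | pos v = n / 2}) (D := depthSnd) ?_ ?_ hx hy hz
      hhalf (hxy.symm.trans hhalf) hne
    · intro v hv w hw h
      have hv₁ : depthFst v = 0 := depthFst_eq_zero (hv.trans_ne (by omega))
      have hw₁ : depthFst w = 0 := depthFst_eq_zero (hw.trans_ne (by omega))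
      exact ext (hv.trans hw.symm) (hv₁.trans hw₁.symm) h
    · intro v hv hv₂ w hvw
      rw [adj_iff hn] at hvw
      simp only [Set.mem_ofPred_eq] at hv ⊢
      omega

theorem not_isMVSet_of_strictMono_pos (hn : 3 ≤ n) {X : Set (Fin n ⊕ (Fin a ⊕ Fin b))}
    {x : Fin 4 → Fin n ⊕ (Fin a ⊕ Fin b)} (hxX : ∀ i, x i ∈ X) (hx : StrictMono (pos ∘ x)) :
    ¬IsMVSet (frogGraph n a b) X := by
  intro hX
  have h₀₁ : pos (x 0) < pos (x 1) := hx (by decide)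
  have h₁₂ : pos (x 1) < pos (x 2) := hx (by decide)
  have h₂₃ : pos (x 2) < pos (x 3) := hx (by decide)
  have hhalf : pos (x 1) = n / 2 ∨ pos (x 3) = n / 2 := by
    by_contra! h
    exact not_isMVSet_of_pos_lt hn (hxX 1) (hxX 3) (hxX 2) (hxX 0) h₁₂ h₂₃ (Or.inl h₀₁)
      (depthFst_eq_zero (by omega)) (depthSnd_eq_zero h.1) (depthFst_eq_zero (by omega))
      (depthSnd_eq_zero h.2) hX
  have htail : depthFst (x 0) ≠ 0 := fun h =>
    not_isMVSet_of_pos_lt hn (hxX 0) (hxX 2) (hxX 1) (hxX 3) h₀₁ h₁₂ (Or.inr h₂₃) h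
      (depthSnd_eq_zero (by omega)) (depthFst_eq_zero (by omega)) (depthSnd_eq_zero (by omega)) hX
  have hvis : VisiblePair (frogGraph n a b) X (x 2) (x 0) :=
    hX _ (hxX 2) _ (hxX 0) (ne_of_apply_ne pos (by omega))
  rcases hhalf with h | h
  · exact not_visiblePair_of_pos_between hn (hxX 3) htail (depthFst_eq_zero (by omega))
      (depthSnd_eq_zero (by omega)) (Or.inl (by omega)) hvis
  · exact not_visiblePair_of_pos_between hn (hxX 1) htail (depthFst_eq_zero (by omega))
      (depthSnd_eq_zero (by omega)) (Or.inr (by omega)) hvis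

theorem ncard_le_three (hn : 3 ≤ n) {X : Set (Fin n ⊕ (Fin a ⊕ Fin b))}
    (hX : IsMVSet (frogGraph n a b) X) : X.ncard ≤ 3 := by
  by_contra! h
  have hcard : 4 ≤ (pos '' X).toFinite.toFinset.card := by
    rwa [← Set.ncard_eq_toFinset_card _, (injOn_pos hn hX (by omega)).ncard_image]
  have hmem : ∀ i, ∃ x ∈ X, pos x = Finset.orderEmbOfCardLe _ hcard i := fun i =>
    (Set.Finite.mem_toFinset (Set.toFinite (pos '' X))).1
      (Finset.orderEmbOfCardLe_mem _ hcard i)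
  choose x hxX hx using hmem
  refine not_isMVSet_of_strictMono_pos hn hxX ?_ hX
  rw [show pos ∘ x = _ from funext hx]
  exact (Finset.orderEmbOfCardLe _ hcard).strictMono

theorem not_isAcyclic (hn : 3 ≤ n) : ¬(frogGraph n a b).IsAcyclic := by
  rw [isAcyclic_iff_free_cycleGraph]
  refine fun h => h n hn ⟨⟨⟨Sum.inl, fun {i j} hij => ?_⟩, Sum.inl_injective⟩⟩
  have : NeZero n := ⟨by omega⟩
  have hsub : ∀ i j : Fin n, (i - j).val = 1 → (i : ℕ) = (j + 1) % n := fun i j h => by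
    rw [← h, Nat.add_comm, ← Fin.val_add, sub_add_cancel]
  rw [cycleGraph_adj'] at hij
  exact (adj_inl_inl (by omega)).2 (hij.symm.imp (hsub j i) (hsub i j))

theorem mu_eq_three (hn : 3 ≤ n) : mu (frogGraph n a b) = 3 := by
  obtain ⟨X, hX, hXmu⟩ := exists_isMVSet_ncard_eq_mu (frogGraph n a b)
  exact (hXmu ▸ ncard_le_three hn hX).antisymm (three_le_mu_of_not_isAcyclic (not_isAcyclic hn))

end frogGraph

theorem IsFrog.mu_eq_three {V : Type*} {G : SimpleGraph V} (hG : IsFrog G) : mu G = 3 := by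
  obtain ⟨n, a, b, hn, ⟨f⟩⟩ := hG
  rw [mu_congr f, frogGraph.mu_eq_three hn]

theorem stmt17 {V : Type*} [Fintype V] (G : SimpleGraph V) [DecidableRel G.Adj]
    (hconn : G.Connected) (htf : G.CliqueFree 3) :
    mu G = 3 ↔ ((G.IsTree ∧ {v | G.degree v = 1}.ncard = 3) ∨ IsFrog G) := by
  constructor
  · intro h
    by_cases hG : G.IsAcyclic
    · have hT : G.IsTree := ⟨hconn, hG⟩
      exact Or.inl ⟨hT, (mu_eq_three_iff_of_isTree hT).1 h⟩
    · exact Or.inr (isFrog_of_mu_lt_four hconn htf hG (by omega))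
  · rintro (⟨hT, hleaves⟩ | hfrog)
    · exact (mu_eq_three_iff_of_isTree hT).2 hleaves
    · exact hfrog.mu_eq_three
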